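/- arXiv:1204.2306 — 2 statements merged into one kernel-verified Lean document; each statement's English description precedes it below -/
import Mathlib

section
/- Let T be a tree on n vertices that is not a path, with ℓ leaves and h heavy edges, such that each heavy vertex of T has at least one light neighbor. Let S be the set of heavy vertices of T having exactly one light neighbor, s = |S|, and t the size of a maximum matching of the subgraph induced by S. Then λ(T^c) = n + ℓ − h + s − t − 3 and ρ(T^c) = ℓ − h + s − t − 2, where T^c denotes the complement of T. -/
namespace PaperPC

open SimpleGraph

variable {V : Type*}

/-- The degree of a vertex, via the cardinality of its neighbor set. -/
noncomputable def ndeg (G : SimpleGraph V) (v : V) : ℕ := (G.neighborSet v).ncard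

/-- A linear forest: an acyclic graph of maximum degree at most 2,
i.e. a vertex-disjoint union of paths.  A spanning linear subforest of `G`
is exactly a path covering of `G` (isolated vertices are one-vertex paths). -/
def IsLinearForest (H : SimpleGraph V) : Prop :=
  H.IsAcyclic ∧ ∀ v, ndeg H v ≤ 2

/-- The number of paths of a path covering = number of connected components. -/
noncomputable def numPaths (H : SimpleGraph V) : ℕ := Nat.card H.ConnectedComponent

/-- The path covering number `P(G)`. -/
noncomputable def pathCoverNumber (G : SimpleGraph V) : ℕ :=
  sInf {k | ∃ H ≤ G, IsLinearForest H ∧ numPaths H = k}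

/-- `H` is a minimum path covering of `G`. -/
def IsMinPathCover (G H : SimpleGraph V) : Prop :=
  H ≤ G ∧ IsLinearForest H ∧ numPaths H = pathCoverNumber G

open scoped Classical in
/-- The path sequence of a path covering: the multiset of the numbers of vertices
of its paths (a multiset encodes the nondecreasing ordered sequence). -/
noncomputable def pathSeq [Fintype V] (H : SimpleGraph V) : Multiset ℕ :=
  (Finset.univ : Finset H.ConnectedComponent).val.map fun c => c.supp.ncard

/-- `G` admits a unique path sequence. -/
def UniquePathSequence [Fintype V] (G : SimpleGraph V) : Prop :=
  ∀ H₁ H₂ : SimpleGraph V, IsMinPathCover G H₁ → IsMinPathCover G H₂ →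
    pathSeq H₁ = pathSeq H₂

/-- Number of leaves (vertices of degree 1). -/
noncomputable def numLeaves (G : SimpleGraph V) : ℕ := {v | ndeg G v = 1}.ncard

/-- Number of heavy edges (edges both of whose endpoints have degree > 2). -/
noncomputable def numHeavyEdges (G : SimpleGraph V) : ℕ :=
  {e ∈ G.edgeSet | ∀ v ∈ e, 2 < ndeg G v}.ncard

/-- Number of edges. -/
noncomputable def numEdges (G : SimpleGraph V) : ℕ := G.edgeSet.ncard

/-- A graph is 2-sparse if no two adjacent vertices both have degree > 2. -/
def TwoSparse (G : SimpleGraph V) : Prop :=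
  ∀ u v, G.Adj u v → ndeg G u ≤ 2 ∨ ndeg G v ≤ 2

/-- `G` is a path graph. -/
def IsPathGraph (G : SimpleGraph V) : Prop := G.IsTree ∧ ∀ v, ndeg G v ≤ 2

/-- `G` is a cycle graph. -/
def IsCycleGraph (G : SimpleGraph V) : Prop := G.Connected ∧ ∀ v, ndeg G v = 2

/-- A generalized star: a tree with exactly one heavy vertex (the center) in which
all vines have the same number of vertices (equivalently, all leaves are at the same
distance from the center). -/
def IsGenStar (G : SimpleGraph V) : Prop :=
  G.IsTree ∧ ∃ c k, 2 < ndeg G c ∧ (∀ v, v ≠ c → ndeg G v ≤ 2) ∧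
    ∀ v, ndeg G v = 1 → G.dist c v = k

/-- An L(2,1)-labeling. -/
def IsL21Labeling (G : SimpleGraph V) (f : V → ℕ) : Prop :=
  (∀ u v, G.Adj u v → 2 ≤ Nat.dist (f u) (f v)) ∧
  (∀ u v, G.dist u v = 2 → 1 ≤ Nat.dist (f u) (f v))

/-- `λ(G)`: the least `k` such that `G` has an L(2,1)-labeling with labels in `{0,…,k}`. -/
noncomputable def lambdaNum (G : SimpleGraph V) : ℕ :=
  sInf {k | ∃ f : V → ℕ, IsL21Labeling G f ∧ ∀ v, f v ≤ k}

/-- A λ-labeling: an L(2,1)-labeling with maximum label `λ(G)`. -/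
def IsLambdaLabeling (G : SimpleGraph V) (f : V → ℕ) : Prop :=
  IsL21Labeling G f ∧ (∀ v, f v ≤ lambdaNum G) ∧ ∃ v, f v = lambdaNum G

/-- The set of holes of a labeling: unused labels `h` with `1 ≤ h ≤ λ(G) - 1`. -/
def labHoles (G : SimpleGraph V) (f : V → ℕ) : Set ℕ :=
  {h | 1 ≤ h ∧ h + 1 ≤ lambdaNum G ∧ ∀ v, f v ≠ h}

/-- The hole index `ρ(G)`: minimum number of holes over all λ-labelings. -/
noncomputable def holeIndex (G : SimpleGraph V) : ℕ :=
  sInf {k | ∃ f : V → ℕ, IsLambdaLabeling G f ∧ (labHoles G f).ncard = k}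

open scoped Classical in
/-- The island sequence of a labeling: the multiset of cardinalities of the maximal
intervals `[a,b]` of consecutive integers all used by the labeling. -/
noncomputable def islandSeq [Fintype V] (G : SimpleGraph V) (f : V → ℕ) : Multiset ℕ :=
  (((Finset.range (lambdaNum G + 1)) ×ˢ (Finset.range (lambdaNum G + 1))).filter
    (fun q => q.1 ≤ q.2 ∧ (∀ x ∈ Finset.Icc q.1 q.2, ∃ v, f v = x) ∧
      (q.1 = 0 ∨ ∀ v, f v ≠ q.1 - 1) ∧ ∀ v, f v ≠ q.2 + 1)).val.map
    fun q => q.2 - q.1 + 1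

/-- `G` admits (at least) two distinct island sequences. -/
def MultipleIslandSequences [Fintype V] (G : SimpleGraph V) : Prop :=
  ∃ f g : V → ℕ, IsLambdaLabeling G f ∧ IsLambdaLabeling G g ∧
    (labHoles G f).ncard = holeIndex G ∧ (labHoles G g).ncard = holeIndex G ∧
    islandSeq G f ≠ islandSeq G g

/-- A vine: a maximal path one of whose endpoints (`a`) is a leaf and all of whose
vertices are light.  Maximality: any light vertex adjacent to the other end already
lies on the path. -/
def IsVine (G : SimpleGraph V) {a b : V} (p : G.Walk a b) : Prop :=
  p.IsPath ∧ ndeg G a = 1 ∧ (∀ v ∈ p.support, ndeg G v ≤ 2) ∧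
  ∀ c, G.Adj b c → ndeg G c ≤ 2 → c ∈ p.support

/-- A vine with center `v`: the (heavy) vertex adjacent to the non-leaf end of the vine. -/
def IsVineWithCenter (G : SimpleGraph V) {a b : V} (p : G.Walk a b) (v : V) : Prop :=
  IsVine G p ∧ G.Adj b v ∧ 2 < ndeg G v

/-- The matching number of the subgraph of `G` induced by `S`. -/
noncomputable def matchingNumberOn (G : SimpleGraph V) (S : Set V) : ℕ :=
  sSup {k | ∃ M : Set (Sym2 V), M ⊆ G.edgeSet ∧ (∀ e ∈ M, ∀ v ∈ e, v ∈ S) ∧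
    (∀ e ∈ M, ∀ f ∈ M, e ≠ f → ∀ v, v ∈ e → v ∉ f) ∧ M.ncard = k}

/-- Labels used in the family `F`: `A`, or `B k` where `k` records the number of
vertices of each vine of the labeled generalized star that produced the label. -/
inductive Lab | A | B (k : ℕ)

/-- A labeled generalized star with center `c` whose vines have `k` vertices each
(equivalently, every leaf is at distance `k` from `c`); the degenerate case
`deg c = 2` is the convention regarding a path of length `2k` as a labeled
generalized star with two vines.  The neighbors of the center are labeled `B k`,
the other non-leaf vertices (and the center) are labeled `A`, leaves are unlabeled. -/
def IsLGenStar {W : Type*} (H : SimpleGraph W) (c : W) (k : ℕ)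
    (lab : W → Option Lab) : Prop :=
  H.IsTree ∧ 2 ≤ ndeg H c ∧ (∀ v, v ≠ c → ndeg H v ≤ 2) ∧
  (∀ v, ndeg H v = 1 → H.dist c v = k) ∧
  lab c = some Lab.A ∧
  (∀ v, H.Adj c v → lab v = some (Lab.B k)) ∧
  (∀ v, v ≠ c → ¬H.Adj c v → ndeg H v = 1 → lab v = none) ∧
  (∀ v, v ≠ c → ¬H.Adj c v → 2 ≤ ndeg H v → lab v = some Lab.A)

/-- A labeled path: a path with at least three vertices, non-leaf vertices labeled `A`. -/
def IsLPath {W : Type*} (H : SimpleGraph W) (lab : W → Option Lab) : Prop :=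
  H.IsTree ∧ (∀ v, ndeg H v ≤ 2) ∧ 3 ≤ Nat.card W ∧
  (∀ v, ndeg H v = 1 → lab v = none) ∧
  ∀ v, 2 ≤ ndeg H v → lab v = some Lab.A

/-- The induced subgraph of `T` on `s` is a labeled generalized star. -/
def LGenStarOn (T : SimpleGraph V) (s : Set V) (c : V) (k : ℕ)
    (lab : V → Option Lab) : Prop :=
  ∃ hc : c ∈ s, IsLGenStar (T.induce s) ⟨c, hc⟩ k fun v => lab v.1

/-- The induced subgraph of `T` on `s` is a labeled path. -/
def LPathOn (T : SimpleGraph V) (s : Set V) (lab : V → Option Lab) : Prop :=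
  IsLPath (T.induce s) fun v => lab v.1

/-- The family `F` of labeled trees, realized as induced subgraphs (on vertex sets `s`)
of an ambient graph `T`:  start from a labeled generalized star with at least three
vines or from a labeled path, and repeatedly attach, via a single new edge, a labeled
generalized star with at least three vines at a vertex labeled `A` (Type-1), a labeled
path by one of its non-leaf vertices at a vertex labeled `A` (Type-2), or a labeled
generalized star whose vines have the same number of vertices `k` as those of the star
that labeled `u` with `B k`, at a vertex `u` labeled `B k` (Type-3). -/
inductive InF (T : SimpleGraph V) : Set V → (V → Option Lab) → Prop
  | base_star (s : Set V) (c : V) (k : ℕ) (lab : V → Option Lab) :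
      LGenStarOn T s c k lab → 3 ≤ {w ∈ s | T.Adj c w}.ncard → InF T s lab
  | base_path (s : Set V) (lab : V → Option Lab) :
      LPathOn T s lab → InF T s lab
  | type1 (s : Set V) (lab : V → Option Lab) (t : Set V) (lab' : V → Option Lab)
      (u c : V) (k : ℕ) :
      InF T s lab → Disjoint s t → u ∈ s → c ∈ t → lab u = some Lab.A →
      LGenStarOn T t c k lab' → 3 ≤ {w ∈ t | T.Adj c w}.ncard →
      (∀ x ∈ s, ∀ y ∈ t, (T.Adj x y ↔ x = u ∧ y = c)) →
      (∀ x ∈ s, lab' x = lab x) →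
      InF T (s ∪ t) lab'
  | type2 (s : Set V) (lab : V → Option Lab) (t : Set V) (lab' : V → Option Lab)
      (u v : V) :
      InF T s lab → Disjoint s t → u ∈ s → v ∈ t → lab u = some Lab.A →
      LPathOn T t lab' → 2 ≤ {w ∈ t | T.Adj v w}.ncard →
      (∀ x ∈ s, ∀ y ∈ t, (T.Adj x y ↔ x = u ∧ y = v)) →
      (∀ x ∈ s, lab' x = lab x) →
      InF T (s ∪ t) lab'
  | type3 (s : Set V) (lab : V → Option Lab) (t : Set V) (lab' : V → Option Lab)
      (u c : V) (k : ℕ) :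
      InF T s lab → Disjoint s t → u ∈ s → c ∈ t → lab u = some (Lab.B k) →
      LGenStarOn T t c k lab' →
      (∀ x ∈ s, ∀ y ∈ t, (T.Adj x y ↔ x = u ∧ y = c)) →
      (∀ x ∈ s, lab' x = lab x) →
      InF T (s ∪ t) lab'

/-- `G` is obtained from the tree `T` by expanding each edge of `T` into a complete
graph of arbitrary order: there is an embedding `ι` of the vertices of `T` and an
assignment `b` of a block of vertices of `G` to each edge of `T` such that an original
vertex lies in the block of an edge iff it is an endpoint of that edge, blocks of
distinct edges meet only in original vertices, every vertex of `G` lies in some block,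
and two distinct vertices of `G` are adjacent iff they lie in a common block. -/
def IsBlockExpansion {U W : Type*} (T : SimpleGraph U) (G : SimpleGraph W) : Prop :=
  ∃ (ι : U ↪ W) (b : Sym2 U → Set W),
    (∀ (u : U), ∀ e ∈ T.edgeSet, (ι u ∈ b e ↔ u ∈ e)) ∧
    (∀ e ∈ T.edgeSet, ∀ f ∈ T.edgeSet, e ≠ f → b e ∩ b f ⊆ Set.range ι) ∧
    (∀ w : W, ∃ e ∈ T.edgeSet, w ∈ b e) ∧
    (∀ x y : W, G.Adj x y ↔ x ≠ y ∧ ∃ e ∈ T.edgeSet, x ∈ b e ∧ y ∈ b e)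

theorem ndeg_eq_degree (G : SimpleGraph V) (v : V) [Fintype (G.neighborSet v)] :
    ndeg G v = G.degree v := by
  rw [ndeg, Set.ncard_eq_toFinset_card', ← SimpleGraph.card_neighborFinset_eq_degree]
  rfl

/-- Double counting of the incidences between a vertex set and the edges of a graph. -/
theorem ncard_edgeSet_add_ncard_inside [Fintype V] (G : SimpleGraph V) (A : Finset V) :
    G.edgeSet.ncard + {e ∈ G.edgeSet | ∀ v ∈ e, v ∈ A}.ncard =
      {e ∈ G.edgeSet | ∀ v ∈ e, v ∉ A}.ncard + ∑ v ∈ A, ndeg G v := by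
  classical
  have hdeg : ∀ v, ndeg G v = ∑ e ∈ G.edgeFinset, if v ∈ e then 1 else 0 := fun v => by
    rw [ndeg_eq_degree, ← G.card_incidenceFinset_eq_degree, G.incidenceFinset_eq_filter,
      Finset.card_filter]
  have hset : ∀ p : Sym2 V → Prop, {e ∈ G.edgeSet | p e}.ncard =
      ∑ e ∈ G.edgeFinset, if p e then 1 else 0 := fun p => by
    rw [← Finset.card_filter, ← Set.ncard_coe_finset]
    congr 1
    ext e
    simp
  have hE : G.edgeSet.ncard = ∑ e ∈ G.edgeFinset, 1 := by
    rw [← Finset.card_eq_sum_ones, ← Set.ncard_coe_finset, SimpleGraph.coe_edgeFinset]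
  simp_rw [hset, hE, hdeg]
  rw [Finset.sum_comm, ← Finset.sum_add_distrib, ← Finset.sum_add_distrib]
  refine Finset.sum_congr rfl fun e he => ?_
  induction e with
  | _ a b =>
    have hab : a ≠ b := G.ne_of_adj (by simpa using he)
    have hsum : (∑ v ∈ A, if v ∈ s(a, b) then 1 else 0) =
        (if a ∈ A then 1 else 0) + (if b ∈ A then 1 else 0) := by
      rw [← Finset.sum_ite_eq' A a (fun _ => 1), ← Finset.sum_ite_eq' A b (fun _ => 1),
        ← Finset.sum_add_distrib]
      refine Finset.sum_congr rfl fun v _ => ?_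
      simp only [Sym2.mem_iff]
      by_cases h1 : v = a <;> by_cases h2 : v = b <;> simp_all
    rw [hsum]
    by_cases h1 : a ∈ A <;> by_cases h2 : b ∈ A <;> simp [h1, h2]

theorem exists_degree_le_one_of_isAcyclic {W : Type*} [Fintype W] [Nonempty W] {G : SimpleGraph W}
    [DecidableRel G.Adj] (hG : G.IsAcyclic) : ∃ v, G.degree v ≤ 1 := by
  classical
  obtain ⟨F, hF, -, hFt⟩ :=
    (SimpleGraph.connected_top (V := W)).exists_isTree_le_of_le_of_isAcyclic (le_top : G ≤ ⊤) hG
  by_contra! h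
  have h1 := hFt.card_edgeFinset
  have h2 := Finset.card_le_card (SimpleGraph.edgeFinset_mono hF)
  have h3 := G.sum_degrees_eq_twice_card_edges
  have h4 : ∑ _v : W, 2 ≤ ∑ v, G.degree v := Finset.sum_le_sum fun v _ => h v
  simp at h4
  omega

/-- A vertex of degree at most one in the subgraph of a forest induced by a nonempty set. -/
theorem exists_subsingleton_neighbors_of_isAcyclic {H : SimpleGraph V} (hH : H.IsAcyclic)
    {s : Finset V} (hs : s.Nonempty) :
    ∃ v ∈ s, ∀ x ∈ s, ∀ y ∈ s, H.Adj v x → H.Adj v y → x = y := by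
  classical
  have : Nonempty (s : Set V) := hs.to_subtype
  have hac := hH.induce (s : Set V)
  obtain ⟨v, hv⟩ := exists_degree_le_one_of_isAcyclic hac
  refine ⟨v, v.2, fun x hx y hy hvx hvy => ?_⟩
  rw [← SimpleGraph.card_neighborFinset_eq_degree, Finset.card_le_one] at hv
  simpa using hv ⟨x, hx⟩ (by simpa using hvx) ⟨y, hy⟩ (by simpa using hvy)

open scoped Classical in
/-- The number of consecutive pairs of a list that are adjacent in `H`. -/
noncomputable def consecutiveAdj (H : SimpleGraph V) : List V → ℕ
  | [] => 0
  | [_] => 0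
  | a :: b :: l => (if H.Adj a b then 1 else 0) + consecutiveAdj H (b :: l)

theorem consecutiveAdj_append (H : SimpleGraph V) (a b : List V) (u : V) :
    consecutiveAdj H (a ++ u :: b) = consecutiveAdj H (a ++ [u]) + consecutiveAdj H (u :: b) := by
  induction a with
  | nil => simp [consecutiveAdj]
  | cons x a ih =>
    cases a with
    | nil => simp [consecutiveAdj]
    | cons y a => simp_all [consecutiveAdj, add_assoc]

theorem consecutiveAdj_append_pair (H : SimpleGraph V) (a : List V) (x u : V) :
    consecutiveAdj H (a ++ [x, u]) = consecutiveAdj H (a ++ [x]) + consecutiveAdj H [x, u] :=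
  consecutiveAdj_append H a [u] x

/-- A vertex `v` can be inserted next to its neighbor `u` in a list without separating a pair of
adjacent vertices. -/
theorem exists_insert_consecutiveAdj {H : SimpleGraph V} [Finite V] (hdeg : ∀ v, ndeg H v ≤ 2)
    {l : List V} (hl : l.Nodup) {u v : V} (hu : u ∈ l) (hv : v ∉ l) (huv : H.Adj v u) :
    ∃ l' : List V, l'.Perm (v :: l) ∧ consecutiveAdj H l + 1 ≤ consecutiveAdj H l' := by
  obtain ⟨a, b, rfl⟩ := List.append_of_mem hu
  have left : (∀ x ∈ a.getLast?, ¬ H.Adj x u) → ∃ l' : List V, l'.Perm (v :: (a ++ u :: b)) ∧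
      consecutiveAdj H (a ++ u :: b) + 1 ≤ consecutiveAdj H l' := fun h => by
    refine ⟨a ++ v :: u :: b, List.perm_middle, ?_⟩
    rw [consecutiveAdj_append H a b, consecutiveAdj_append H a (u :: b)]
    have : consecutiveAdj H (a ++ [u]) ≤ consecutiveAdj H (a ++ [v]) := by
      rcases List.eq_nil_or_concat' a with rfl | ⟨a', x, rfl⟩
      · simp [consecutiveAdj]
      · have hx : ¬ H.Adj x u := h x (by simp)
        simp only [List.append_assoc, List.cons_append, List.nil_append,
          consecutiveAdj_append_pair]
        simp [consecutiveAdj, hx]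
    simp only [consecutiveAdj, huv, if_true]
    omega
  have right : (∀ y ∈ b.head?, ¬ H.Adj u y) → ∃ l' : List V, l'.Perm (v :: (a ++ u :: b)) ∧
      consecutiveAdj H (a ++ u :: b) + 1 ≤ consecutiveAdj H l' := fun h => by
    refine ⟨a ++ u :: v :: b, ?_, ?_⟩
    · exact ((List.Perm.swap v u b).append_left a).trans List.perm_middle
    rw [consecutiveAdj_append H a b, consecutiveAdj_append H a (v :: b)]
    cases b with
    | nil => simp [consecutiveAdj, huv.symm]
    | cons y b =>
      have hy : ¬ H.Adj u y := h y (by simp)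
      simp only [consecutiveAdj, huv.symm, hy, if_true, if_false]
      omega
  by_cases h1 : ∀ x ∈ a.getLast?, ¬ H.Adj x u
  · exact left h1
  by_cases h2 : ∀ y ∈ b.head?, ¬ H.Adj u y
  · exact right h2
  push Not at h1 h2
  obtain ⟨x, hx, hxu⟩ := h1
  obtain ⟨y, hy, huy⟩ := h2
  have hxa : x ∈ a := List.mem_of_getLast? hx
  have hyb : y ∈ b := List.mem_of_mem_head? hy
  have hxy : x ≠ y := by
    rintro rfl
    exact (List.nodup_append.1 hl).2.2 x hxa x (by simp [hyb]) rfl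
  have hvx : v ≠ x := by rintro rfl; simp [hxa] at hv
  have hvy : v ≠ y := by rintro rfl; simp [hyb] at hv
  have h3 : ({v, x, y} : Set V).ncard = 3 := Set.ncard_eq_three.2 ⟨v, x, y, hvx, hvy, hxy, rfl⟩
  have h4 : ({v, x, y} : Set V).ncard ≤ (H.neighborSet u).ncard := by
    refine Set.ncard_le_ncard ?_ (Set.toFinite _)
    rintro z (rfl | rfl | rfl)
    exacts [huv.symm, hxu.symm, huy]
  have := hdeg u
  rw [ndeg] at this
  omega

/-- The vertices of a linear forest can be listed so that every edge joins consecutive vertices. -/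
theorem IsLinearForest.exists_list {H : SimpleGraph V} [Finite V] (hH : IsLinearForest H)
    (s : Finset V) :
    ∃ l : List V, l.Nodup ∧ (∀ v, v ∈ l ↔ v ∈ s) ∧
      {e ∈ H.edgeSet | ∀ v ∈ e, v ∈ s}.ncard ≤ consecutiveAdj H l := by
  classical
  induction s using Finset.strongInduction with
  | H s ih =>
    rcases s.eq_empty_or_nonempty with rfl | hs
    · refine ⟨[], by simp, by simp, ?_⟩
      rw [consecutiveAdj, Nat.le_zero, Set.ncard_eq_zero (Set.toFinite _), Set.eq_empty_iff_forall_notMem]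
      rintro ⟨a, b⟩ ⟨-, h⟩
      simpa using h a (by simp)
    obtain ⟨v, hv, huniq⟩ := exists_subsingleton_neighbors_of_isAcyclic hH.1 hs
    obtain ⟨l, hl, hmem, hcard⟩ := ih _ (Finset.erase_ssubset hv)
    have hvl : v ∉ l := by simp [hmem]
    have hperm : ∀ l' : List V, l'.Perm (v :: l) → l'.Nodup ∧ ∀ w, w ∈ l' ↔ w ∈ s := by
      intro l' hl'
      refine ⟨hl'.nodup_iff.2 (List.nodup_cons.2 ⟨hvl, hl⟩), fun w => ?_⟩
      rw [hl'.mem_iff, List.mem_cons, hmem, Finset.mem_erase]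
      by_cases hw : w = v <;> simp [hw, hv]
    by_cases hu : ∃ u ∈ s, H.Adj v u
    · obtain ⟨u, hus, huv⟩ := hu
      have hul : u ∈ l := by simp [hmem, hus, huv.ne']
      obtain ⟨l', hp, hc⟩ := exists_insert_consecutiveAdj hH.2 hl hul hvl huv
      refine ⟨l', (hperm l' hp).1, (hperm l' hp).2, le_trans ?_ hc⟩
      refine le_trans ?_ (Nat.add_le_add_right hcard 1)
      refine le_trans (Set.ncard_le_ncard ?_ (Set.toFinite _)) (Set.ncard_insert_le s(v, u) _)
      rintro ⟨a, b⟩ ⟨hab, hs'⟩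
      have ha := hs' a (by simp)
      have hb := hs' b (by simp)
      have hab' : H.Adj a b := hab
      by_cases hav : a = v
      · subst hav
        exact Or.inl (by rw [huniq b hb u hus hab' huv])
      by_cases hbv : b = v
      · subst hbv
        exact Or.inl (by rw [huniq a ha u hus hab'.symm huv]; exact Sym2.eq_swap)
      refine Or.inr ⟨hab, fun w hw => ?_⟩
      rcases Sym2.mem_iff.1 hw with rfl | rfl <;> simp [*]
    · push Not at hu
      have hp := hperm _ (List.Perm.refl _)
      refine ⟨v :: l, hp.1, hp.2, le_trans (le_trans ?_ hcard) ?_⟩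
      · refine Set.ncard_le_ncard ?_ (Set.toFinite _)
        rintro ⟨a, b⟩ ⟨hab, hs'⟩
        have ha := hs' a (by simp)
        have hb := hs' b (by simp)
        have hab' : H.Adj a b := hab
        have hav : a ≠ v := by rintro rfl; exact hu b hb hab'
        have hbv : b ≠ v := by rintro rfl; exact hu a ha hab'.symm
        refine ⟨hab, fun w hw => ?_⟩
        rcases Sym2.mem_iff.1 hw with rfl | rfl <;> simp [*]
      · cases l with
        | nil => simp [consecutiveAdj]
        | cons x l => simp [consecutiveAdj]

theorem consecutiveAdj_le (H : SimpleGraph V) (l : List V) : consecutiveAdj H l ≤ l.length := by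
  induction l with
  | nil => simp [consecutiveAdj]
  | cons x l ih =>
    cases l with
    | nil => simp [consecutiveAdj]
    | cons y l =>
      simp only [consecutiveAdj, List.length_cons] at ih ⊢
      split_ifs <;> omega

/-- Labeling the vertices along a list, with steps `1` across edges of `H` and `2` otherwise. -/
theorem exists_labeling_of_list (H : SimpleGraph V) (x : V) (l : List V) (hl : (x :: l).Nodup) :
    ∃ f : V → ℕ, f x = 0 ∧ (∀ y ∈ l, 1 ≤ f y) ∧
      (∀ y ∈ x :: l, f y + consecutiveAdj H (x :: l) ≤ 2 * l.length) ∧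
      ∀ y ∈ x :: l, ∀ z ∈ x :: l, y ≠ z → f y ≤ f z →
        f y + 1 ≤ f z ∧ (¬ H.Adj y z → f y + 2 ≤ f z) := by
  classical
  induction l generalizing x with
  | nil => exact ⟨fun _ => 0, by simp [consecutiveAdj]⟩
  | cons w l ih =>
    obtain ⟨hx, hl'⟩ := List.nodup_cons.1 hl
    obtain ⟨f, hf0, hf1, hf2, hf3⟩ := ih w hl'
    set d := if H.Adj x w then 1 else 2 with hd
    have hd1 : 1 ≤ d := by rw [hd]; split_ifs <;> omega
    have hc : consecutiveAdj H (x :: w :: l) + d = 2 + consecutiveAdj H (w :: l) := by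
      simp only [consecutiveAdj, hd]; split_ifs <;> omega
    have hne : ∀ y ∈ w :: l, y ≠ x := fun y hy => by rintro rfl; exact hx hy
    refine ⟨fun y => if y = x then 0 else f y + d, by simp, ?_, ?_, ?_⟩
    · intro y hy
      simp only [hne y hy, if_false]
      omega
    · intro y hy
      rcases List.mem_cons.1 hy with rfl | hy
      · have := hf2 w (by simp)
        simp only [if_true, List.length_cons]
        omega
      · have := hf2 y hy
        simp only [hne y hy, if_false, List.length_cons]
        omega
    · intro y hy z hz hyz hle
      rcases List.mem_cons.1 hy with hyx | hyw <;> rcases List.mem_cons.1 hz with hzx | hzw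
      · exact absurd (hyx.trans hzx.symm) hyz
      · subst hyx
        simp only [hne z hzw, if_true, if_false] at hle ⊢
        refine ⟨by omega, fun hnadj => ?_⟩
        rcases List.mem_cons.1 hzw with rfl | hzl
        · simp [hd, hnadj]
        · have := hf1 z hzl
          omega
      · simp only [hne y hyw, hzx, if_true, if_false] at hle
        omega
      · simp only [hne y hyw, hne z hzw, if_false] at hle ⊢
        obtain ⟨h1, h2⟩ := hf3 y hyw z hzw hyz (by omega)
        exact ⟨by omega, fun h => by have := h2 h; omega⟩

/-- A path covering with many edges of the complement of a graph yields an injective labeling. -/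
theorem exists_injective_labeling [Fintype V] [Nonempty V] {T H : SimpleGraph V} (hHT : H ≤ T)
    (hH : IsLinearForest H) :
    ∃ f : V → ℕ, Function.Injective f ∧ IsL21Labeling Tᶜ f ∧
      ∀ v, f v + 2 + H.edgeSet.ncard ≤ 2 * Fintype.card V := by
  classical
  obtain ⟨l, hl, hmem, hcard⟩ := hH.exists_list Finset.univ
  have hlen : l.length = Fintype.card V := by
    rw [← List.toFinset_card_of_nodup hl, ← Finset.card_univ]
    congr 1
    ext v
    simp [hmem]
  have hE : {e ∈ H.edgeSet | ∀ v ∈ e, v ∈ (Finset.univ : Finset V)} = H.edgeSet := by simp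
  rw [hE] at hcard
  cases l with
  | nil => simp at hmem
  | cons x l =>
    obtain ⟨f, -, -, hf2, hf3⟩ := exists_labeling_of_list H x l hl
    have hm : ∀ v, v ∈ x :: l := fun v => by simp [hmem]
    have hinj : Function.Injective f := fun y z hyz => by
      by_contra hne
      have := (hf3 y (hm y) z (hm z) hne hyz.le).1
      omega
    refine ⟨f, hinj, ⟨fun u v huv => ?_, fun u v huv => ?_⟩, fun v => ?_⟩
    · rw [SimpleGraph.compl_adj] at huv
      rcases le_total (f u) (f v) with h | h
      · have := (hf3 u (hm u) v (hm v) huv.1 h).2 fun h' => huv.2 (hHT h')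
        rw [Nat.dist_eq_sub_of_le h]
        omega
      · have := (hf3 v (hm v) u (hm u) huv.1.symm h).2 fun h' => huv.2 (hHT h').symm
        rw [Nat.dist_eq_sub_of_le_right h]
        omega
    · have hne : u ≠ v := by rintro rfl; simp at huv
      exact Nat.dist_pos_of_ne (hinj.ne hne)
    · have := hf2 v (hm v)
      simp only [List.length_cons] at hlen
      omega

/-- An injective labeling of the complement of `T` with small labels yields a subgraph of `T` of
maximum degree at most two with many edges. -/
theorem exists_subgraph_of_injective_labeling [Fintype V] {T : SimpleGraph V} {f : V → ℕ} {k : ℕ}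
    (hf : IsL21Labeling Tᶜ f) (hinj : Function.Injective f) (hk : ∀ v, f v ≤ k) :
    ∃ H ≤ T, (∀ v, ndeg H v ≤ 2) ∧ 2 * Fintype.card V ≤ k + 2 + H.edgeSet.ncard := by
  classical
  let H : SimpleGraph V :=
    { Adj := fun u v => f v = f u + 1 ∨ f u = f v + 1
      symm := ⟨fun u v h => h.symm⟩
      loopless := ⟨fun v h => by omega⟩ }
  have hadj : ∀ u v, H.Adj u v ↔ f v = f u + 1 ∨ f u = f v + 1 := fun _ _ => Iff.rfl
  refine ⟨H, fun u v huv => ?_, fun v => ?_, ?_⟩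
  · by_contra hn
    have := hf.1 u v ((SimpleGraph.compl_adj _ _ _).2 ⟨huv.ne, hn⟩)
    rw [hadj] at huv
    rw [Nat.dist] at this
    omega
  · have h1 : (H.neighborSet v).ncard ≤ ({f v - 1, f v + 1} : Set ℕ).ncard := by
      refine Set.ncard_le_ncard_of_injOn f (fun w hw => ?_) hinj.injOn (Set.toFinite _)
      have : H.Adj v w := hw
      rw [hadj] at this
      simp only [Set.mem_insert_iff, Set.mem_singleton_iff]
      omega
    refine h1.trans ((Set.ncard_insert_le _ _).trans ?_)
    rw [Set.ncard_singleton]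
  · let A : Finset V := Finset.univ.filter fun w => ∃ w', f w' = f w + 1
    have hA : A.card ≤ H.edgeSet.ncard := by
      have hex : ∀ w, ∃ w', w ∈ A → f w' = f w + 1 := fun w => by
        by_cases hw : w ∈ A
        · obtain ⟨w', h⟩ := (Finset.mem_filter.1 hw).2
          exact ⟨w', fun _ => h⟩
        · exact ⟨w, fun h => absurd h hw⟩
      choose g hg using hex
      rw [← Set.ncard_coe_finset]
      refine Set.ncard_le_ncard_of_injOn (fun w => s(w, g w)) (fun w hw => ?_) ?_ (Set.toFinite _)
      · exact Or.inl (hg w hw)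
      · intro w hw z hz h
        have h1 := hg w hw
        have h2 := hg z hz
        rcases Sym2.eq_iff.1 h with ⟨h, -⟩ | ⟨h, h'⟩
        · exact h
        · rw [h'] at h1
          rw [← h] at h2
          omega
    have hB : (Finset.univ.filter fun w => ¬ ∃ w', f w' = f w + 1).card ≤
        (Finset.range (k + 2) \ Finset.univ.image f).card := by
      refine Finset.card_le_card_of_injOn (fun w => f w + 1) (fun w hw => ?_) ?_
      · have hw' := (Finset.mem_filter.1 hw).2
        have := hk w
        simp only [Finset.coe_sdiff, Set.mem_sdiff, Finset.mem_coe, Finset.mem_range,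
          Finset.mem_image, Finset.mem_univ, true_and]
        exact ⟨by omega, hw'⟩
      · intro w _ z _ h
        exact hinj (by simpa using h)
    have hsub : Finset.univ.image f ⊆ Finset.range (k + 2) := fun i hi => by
      obtain ⟨v, -, rfl⟩ := Finset.mem_image.1 hi
      have := hk v
      simp only [Finset.mem_range]
      omega
    rw [Finset.card_sdiff_of_subset hsub, Finset.card_range,
      Finset.card_image_of_injective _ hinj, Finset.card_univ] at hB
    have hAB := Finset.card_filter_add_card_filter_not (s := (Finset.univ : Finset V))
      (fun w => ∃ w', f w' = f w + 1)
    rw [Finset.card_univ] at hAB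
    have hcard := Finset.card_le_card hsub
    rw [Finset.card_image_of_injective _ hinj, Finset.card_univ, Finset.card_range] at hcard
    change A.card + _ = _ at hAB
    omega

theorem not_adj_of_adj_adj {T : SimpleGraph V} (hT : T.IsAcyclic) {a b c : V}
    (hab : T.Adj a b) (hbc : T.Adj b c) : ¬ T.Adj a c := fun hac => by
  have h := (hT.subsingleton_path _ _).elim (SimpleGraph.Path.singleton hac)
    ⟨.cons hab (.cons hbc .nil), by simp [hab.ne, hbc.ne, hac.ne]⟩
  have := congrArg (fun p : T.Path a c => p.1.length) h
  simp [SimpleGraph.Path.singleton] at this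

theorem not_adj_of_adj_adj_adj {T : SimpleGraph V} (hT : T.IsAcyclic) {a b c d : V}
    (hab : T.Adj a b) (hbc : T.Adj b c) (hcd : T.Adj c d) (hbd : b ≠ d) (hac : a ≠ c) :
    ¬ T.Adj a d := fun had => by
  have h := (hT.subsingleton_path _ _).elim (SimpleGraph.Path.singleton had)
    ⟨.cons hab (.cons hbc (.cons hcd .nil)), by
      simp [hab.ne, hbc.ne, hcd.ne, hbd, hac, had.ne]⟩
  have := congrArg (fun p : T.Path a d => p.1.length) h
  simp [SimpleGraph.Path.singleton] at this

/-- Labelings of the complement of a tree with a repeated label need large labels. -/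
theorem card_le_of_not_injective_labeling [Fintype V] {T : SimpleGraph V} (hT : T.IsAcyclic)
    {f : V → ℕ} {k : ℕ} (hf : IsL21Labeling Tᶜ f) (hinj : ¬ Function.Injective f)
    (hk : ∀ v, f v ≤ k) : 2 * Fintype.card V ≤ k + 4 := by
  classical
  simp only [Function.Injective, not_forall] at hinj
  obtain ⟨u, v, hfuv, huv⟩ := hinj
  have hsep : ∀ x y, x ≠ y → ¬ T.Adj x y → 2 ≤ Nat.dist (f x) (f y) := fun x y hxy h =>
    hf.1 x y ((SimpleGraph.compl_adj _ _ _).2 ⟨hxy, h⟩)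
  have huv' : T.Adj u v := by
    by_contra h
    have := hsep u v huv h
    rw [hfuv, Nat.dist_self] at this
    omega
  have hcover : ∀ w, w ≠ u → w ≠ v → T.Adj w u ∨ T.Adj w v := by
    intro w hwu hwv
    by_contra! h
    have h1 : Tᶜ.Adj u w := (SimpleGraph.compl_adj _ _ _).2 ⟨hwu.symm, fun h' => h.1 h'.symm⟩
    have h2 : Tᶜ.Adj w v := (SimpleGraph.compl_adj _ _ _).2 ⟨hwv, h.2⟩
    have h3 : Tᶜ.dist u v ≤ 2 := SimpleGraph.dist_le (.cons h1 (.cons h2 .nil))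
    have h4 : Tᶜ.dist u v ≠ 0 := fun h0 => huv
      (((h1.reachable.trans h2.reachable).dist_eq_zero_iff).1 h0)
    have h5 : Tᶜ.dist u v ≠ 1 := fun h1 => by
      rw [SimpleGraph.dist_eq_one_iff_adj, SimpleGraph.compl_adj] at h1
      exact h1.2 huv'
    have := hf.2 u v (by omega)
    rw [hfuv, Nat.dist_self] at this
    omega
  have hu : ∀ w, w ≠ u → w ≠ v → 2 ≤ Nat.dist (f u) (f w) := by
    intro w hwu hwv
    rcases hcover w hwu hwv with h | h
    · rw [hfuv]
      exact hsep v w hwv.symm fun h' => not_adj_of_adj_adj hT huv' h' h.symm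
    · exact hsep u w hwu.symm fun h' => not_adj_of_adj_adj hT huv' h.symm h'
  have hother : ∀ w z, w ≠ u → w ≠ v → z ≠ u → z ≠ v → w ≠ z → 2 ≤ Nat.dist (f w) (f z) := by
    intro w z hwu hwv hzu hzv hwz
    refine hsep w z hwz ?_
    rcases hcover w hwu hwv with h | h <;> rcases hcover z hzu hzv with h' | h'
    · exact not_adj_of_adj_adj hT h h'.symm
    · exact not_adj_of_adj_adj_adj hT h huv' h'.symm hzu.symm hwv
    · exact not_adj_of_adj_adj_adj hT h huv'.symm h'.symm hzv.symm hwu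
    · exact not_adj_of_adj_adj hT h h'.symm
  have hcard : (Finset.univ.erase v).card ≤ (Finset.range (k / 2 + 1)).card := by
    refine Finset.card_le_card_of_injOn (fun w => f w / 2) (fun w _ => ?_) ?_
    · have := hk w
      simp only [Finset.coe_range, Set.mem_Iio]
      omega
    · intro w hw z hz hwz
      have hwv : w ≠ v := by simpa using hw
      have hzv : z ≠ v := by simpa using hz
      by_contra hne
      have : 2 ≤ Nat.dist (f w) (f z) := by
        by_cases hwu : w = u
        · subst hwu
          exact hu z (Ne.symm hne) hzv
        by_cases hzu : z = u
        · subst hzu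
          rw [Nat.dist_comm]
          exact hu w hne hwv
        exact hother w z hwu hwv hzu hzv hne
      simp only at hwz
      rw [Nat.dist] at this
      omega
  rw [Finset.card_erase_of_mem (Finset.mem_univ _), Finset.card_univ, Finset.card_range] at hcard
  omega

theorem lambdaNum_le {G : SimpleGraph V} {f : V → ℕ} {k : ℕ} (hf : IsL21Labeling G f)
    (hk : ∀ v, f v ≤ k) : lambdaNum G ≤ k :=
  Nat.sInf_le ⟨f, hf, hk⟩

/-- A labeling with labels at most `λ(G)` uses the labels `0` and `λ(G)`, so that its unused labels
are exactly its holes. -/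
theorem ncard_labHoles_add [Finite V] {G : SimpleGraph V} {f : V → ℕ} (hf : IsL21Labeling G f)
    (hk : ∀ v, f v ≤ lambdaNum G) (hpos : 1 ≤ lambdaNum G) :
    (∃ v, f v = lambdaNum G) ∧
      (labHoles G f).ncard + (Set.range f).ncard = lambdaNum G + 1 := by
  have htop : ∃ v, f v = lambdaNum G := by
    by_contra! h
    have := lambdaNum_le hf (k := lambdaNum G - 1) fun v => by
      have h1 := hk v
      have h2 := h v
      omega
    omega
  have hbot : ∃ v, f v = 0 := by
    by_contra! h
    have hdist : ∀ u v, Nat.dist (f u - 1) (f v - 1) = Nat.dist (f u) (f v) := fun u v => by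
      have h1 := h u
      have h2 := h v
      simp only [Nat.dist]
      omega
    have := lambdaNum_le (G := G) (f := fun v => f v - 1) (k := lambdaNum G - 1)
      ⟨fun u v huv => by rw [hdist]; exact hf.1 u v huv,
        fun u v huv => by rw [hdist]; exact hf.2 u v huv⟩ fun v => by
      have h1 := hk v
      omega
    omega
  refine ⟨htop, ?_⟩
  obtain ⟨a, ha⟩ := htop
  obtain ⟨b, hb⟩ := hbot
  have hholes : labHoles G f = (Finset.range (lambdaNum G + 1) : Set ℕ) \ Set.range f := by
    ext i
    simp only [labHoles, Set.mem_ofPred_eq, Finset.coe_range, Set.mem_sdiff, Set.mem_Iio,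
      Set.mem_range, not_exists]
    constructor
    · rintro ⟨h1, h2, h3⟩
      exact ⟨by omega, h3⟩
    · rintro ⟨h1, h3⟩
      have h4 := h3 a
      have h5 := h3 b
      exact ⟨by omega, by omega, h3⟩
  have hsub : Set.range f ⊆ (Finset.range (lambdaNum G + 1) : Set ℕ) := by
    rintro _ ⟨v, rfl⟩
    have := hk v
    simp only [Finset.coe_range, Set.mem_Iio]
    omega
  rw [hholes, Set.ncard_sdiff_add_ncard_of_subset hsub (Set.toFinite _), Set.ncard_coe_finset,
    Finset.card_range]

/-- The `λ`-number and the hole index of the complement of a forest in terms of the maximum number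
of edges of a path covering. -/
theorem lambdaNum_holeIndex_compl [Fintype V] [Nonempty V] {T : SimpleGraph V} (hT : T.IsAcyclic)
    {m : ℕ} (hm : 2 ≤ m) (hmcard : m + 2 ≤ Fintype.card V)
    (hex : ∃ H ≤ T, (∀ v, ndeg H v ≤ 2) ∧ m ≤ H.edgeSet.ncard)
    (hmax : ∀ H ≤ T, (∀ v, ndeg H v ≤ 2) → H.edgeSet.ncard ≤ m) :
    lambdaNum Tᶜ + m + 2 = 2 * Fintype.card V ∧ holeIndex Tᶜ + m + 1 = Fintype.card V := by
  have hlower : ∀ (f : V → ℕ) (k : ℕ), IsL21Labeling Tᶜ f → (∀ v, f v ≤ k) →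
      2 * Fintype.card V ≤ k + m + 2 := fun f k hf hk => by
    by_cases hinj : Function.Injective f
    · obtain ⟨H, hHT, hdeg, hle⟩ := exists_subgraph_of_injective_labeling hf hinj hk
      have := hmax H hHT hdeg
      omega
    · have := card_le_of_not_injective_labeling hT hf hinj hk
      omega
  obtain ⟨H, hHT, hdeg, hmH⟩ := hex
  obtain ⟨f, hinj, hf, hfle⟩ := exists_injective_labeling hHT ⟨hT.anti hHT, hdeg⟩
  have hlam : lambdaNum Tᶜ + m + 2 = 2 * Fintype.card V := by
    have h1 : lambdaNum Tᶜ ≤ 2 * Fintype.card V - m - 2 := lambdaNum_le hf fun v => by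
      have := hfle v
      omega
    obtain ⟨g, hg, hgk⟩ := Nat.sInf_mem (s := {k | ∃ f : V → ℕ, IsL21Labeling Tᶜ f ∧ ∀ v, f v ≤ k})
      ⟨_, f, hf, fun v => show f v ≤ 2 * Fintype.card V by have := hfle v; omega⟩
    have h2 := hlower g (lambdaNum Tᶜ) hg hgk
    omega
  have hpos : 1 ≤ lambdaNum Tᶜ := by omega
  refine ⟨hlam, ?_⟩
  have hfk : ∀ v, f v ≤ lambdaNum Tᶜ := fun v => by
    have := hfle v
    omega
  have hcard : (Set.range f).ncard = Fintype.card V := by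
    rw [← Set.image_univ, Set.ncard_image_of_injective _ hinj, Set.ncard_univ,
      Nat.card_eq_fintype_card]
  obtain ⟨hftop, hfholes⟩ := ncard_labHoles_add hf hfk hpos
  have hle : holeIndex Tᶜ ≤ (labHoles Tᶜ f).ncard := Nat.sInf_le ⟨f, ⟨hf, hfk, hftop⟩, rfl⟩
  obtain ⟨g, hg, hgh⟩ := Nat.sInf_mem
    (s := {k | ∃ f : V → ℕ, IsLambdaLabeling Tᶜ f ∧ (labHoles Tᶜ f).ncard = k})
    ⟨_, f, ⟨hf, hfk, hftop⟩, rfl⟩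
  obtain ⟨-, hgholes⟩ := ncard_labHoles_add hg.1 hg.2.1 hpos
  have hgcard : (Set.range g).ncard ≤ Fintype.card V := by
    rw [← Set.image_univ, ← Nat.card_eq_fintype_card, ← Set.ncard_univ]
    exact Set.ncard_image_le
  change _ = holeIndex Tᶜ at hgh
  omega

theorem bddAbove_matching [Finite V] (T : SimpleGraph V) (S : Set V) :
    BddAbove {k | ∃ M : Set (Sym2 V), M ⊆ T.edgeSet ∧ (∀ e ∈ M, ∀ v ∈ e, v ∈ S) ∧
      (∀ e ∈ M, ∀ f ∈ M, e ≠ f → ∀ v, v ∈ e → v ∉ f) ∧ M.ncard = k} := by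
  refine ⟨T.edgeSet.ncard, ?_⟩
  rintro _ ⟨M, hM, -, -, rfl⟩
  exact Set.ncard_le_ncard hM (Set.toFinite _)

/-- The number of vertices of `S` covered by a set `R` of edges exceeds `|R|` by at most the
matching number of `S`. -/
theorem ncard_covered_le [Finite V] (T : SimpleGraph V) (S : Set V) {R : Set (Sym2 V)}
    (hR : R ⊆ T.edgeSet) :
    {v ∈ S | ∃ e ∈ R, v ∈ e}.ncard ≤ R.ncard + matchingNumberOn T S := by
  classical
  obtain ⟨M, ⟨hMR, hMS, hMd⟩, hmax⟩ := Set.Finite.exists_maximal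
    (s := {M : Set (Sym2 V) | M ⊆ R ∧ (∀ e ∈ M, ∀ v ∈ e, v ∈ S) ∧
      ∀ e ∈ M, ∀ f ∈ M, e ≠ f → ∀ v, v ∈ e → v ∉ f}) (Set.toFinite _)
    ⟨∅, by simp⟩
  have hMt : M.ncard ≤ matchingNumberOn T S :=
    le_csSup (bddAbove_matching T S) ⟨M, hMR.trans hR, hMS, hMd, rfl⟩
  let C : Set V := {v | ∃ e ∈ M, v ∈ e}
  have hC : C.ncard ≤ 2 * M.ncard := by
    have hCeq : C = ⋃ e ∈ (Set.toFinite M).toFinset, (e : Set V) := by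
      ext v
      simp [C]
    rw [hCeq, Set.ncard_eq_toFinset_card _ (Set.toFinite M), mul_comm]
    refine (Finset.set_ncard_biUnion_le _ _).trans (Finset.sum_le_card_nsmul _ _ 2 ?_)
    rintro ⟨a, b⟩ -
    have : ((s(a, b) : Sym2 V) : Set V) = {a, b} := by
      ext v
      simp
    change ((s(a, b) : Sym2 V) : Set V).ncard ≤ 2
    rw [this]
    refine (Set.ncard_insert_le _ _).trans ?_
    rw [Set.ncard_singleton]
  let U : Set V := {v ∈ S | (∃ e ∈ R, v ∈ e) ∧ v ∉ C}
  have hU : U.ncard ≤ (R \ M).ncard := by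
    have hex : ∀ v, ∃ e, v ∈ U → e ∈ R ∧ v ∈ e := fun v => by
      by_cases hv : v ∈ U
      · obtain ⟨e, he⟩ := hv.2.1
        exact ⟨e, fun _ => he⟩
      · exact ⟨s(v, v), fun h => absurd h hv⟩
    choose g hg using hex
    refine Set.ncard_le_ncard_of_injOn g (fun v hv => ⟨(hg v hv).1, fun h => hv.2.2
      ⟨g v, h, (hg v hv).2⟩⟩) (fun v hv w hw hvw => ?_) (Set.toFinite _)
    by_contra hne
    have hgv : g v = s(v, w) :=
      (Sym2.mem_and_mem_iff hne).1 ⟨(hg v hv).2, hvw ▸ (hg w hw).2⟩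
    have hmem : ∀ x ∈ s(v, w), x ∈ S ∧ x ∉ C := fun x hx => by
      rcases Sym2.mem_iff.1 hx with rfl | rfl
      exacts [⟨hv.1, hv.2.2⟩, ⟨hw.1, hw.2.2⟩]
    have hins := hmax (y := insert s(v, w) M) ⟨?_, ?_, ?_⟩ (Set.subset_insert _ _)
      (Set.mem_insert _ _)
    · exact hv.2.2 ⟨_, hins, by simp⟩
    · exact Set.insert_subset (hgv ▸ (hg v hv).1) hMR
    · rintro e (rfl | he) x hx
      exacts [(hmem x hx).1, hMS e he x hx]
    · rintro e (rfl | he) f (rfl | hf) hef x hxe hxf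
      · exact hef rfl
      · exact (hmem x hxe).2 ⟨f, hf, hxf⟩
      · exact (hmem x hxf).2 ⟨e, he, hxe⟩
      · exact hMd e he f hf hef x hxe hxf
  have hcov : {v ∈ S | ∃ e ∈ R, v ∈ e} ⊆ C ∪ U := by
    rintro v ⟨hvS, hv⟩
    by_cases h : v ∈ C
    exacts [Or.inl h, Or.inr ⟨hvS, hv, h⟩]
  have h1 := Set.ncard_le_ncard hcov (Set.toFinite _)
  have h2 := Set.ncard_union_le C U
  have h3 := Set.ncard_sdiff_add_ncard_of_subset hMR (Set.toFinite _)
  omega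

/-- Upper bound for the number of edges of a path covering. -/
theorem ncard_edgeSet_add_le [Fintype V] {T H : SimpleGraph V} {A : Finset V}
    (hA : ∀ v, v ∈ A ↔ 2 < ndeg T v) {S : Set V}
    (hS : S = {v | 2 < ndeg T v ∧ {w | T.Adj v w ∧ ndeg T w ≤ 2}.ncard = 1})
    (hHT : H ≤ T) (hdeg : ∀ v, ndeg H v ≤ 2) :
    H.edgeSet.ncard + S.ncard ≤
      {e ∈ T.edgeSet | ∀ v ∈ e, v ∉ A}.ncard + 2 * A.card + matchingNumberOn T S := by
  classical
  have hcount := ncard_edgeSet_add_ncard_inside H A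
  set R : Set (Sym2 V) := {e ∈ H.edgeSet | ∀ v ∈ e, v ∈ A} with hR
  have hsub : H.edgeSet ⊆ T.edgeSet := SimpleGraph.edgeSet_mono hHT
  have hLL : {e ∈ H.edgeSet | ∀ v ∈ e, v ∉ A}.ncard ≤
      {e ∈ T.edgeSet | ∀ v ∈ e, v ∉ A}.ncard :=
    Set.ncard_le_ncard (fun e he => ⟨hsub he.1, he.2⟩) (Set.toFinite _)
  have hcov := ncard_covered_le T S (R := R) fun e he => hsub he.1
  have hsum : ∑ v ∈ A, ndeg H v + (A.filter fun v => v ∈ S ∧ ¬ ∃ e ∈ R, v ∈ e).card ≤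
      2 * A.card := by
    rw [Finset.card_filter, ← Finset.sum_add_distrib, mul_comm]
    refine Finset.sum_le_card_nsmul _ _ 2 fun v hv => ?_
    split_ifs with h
    · have hle : ndeg H v ≤ 1 := by
        obtain ⟨hvS, hvR⟩ := h
        rw [hS] at hvS
        rw [← hvS.2]
        refine Set.ncard_le_ncard (fun w hw => ⟨hHT hw, ?_⟩) (Set.toFinite _)
        by_contra hw'
        refine hvR ⟨s(v, w), ⟨hw, fun x hx => ?_⟩, by simp⟩
        rcases Sym2.mem_iff.1 hx with rfl | rfl
        · exact hv
        · exact (hA x).2 (not_le.1 hw')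
      omega
    · exact hdeg v
  have hSsplit : S.ncard ≤ {v ∈ S | ∃ e ∈ R, v ∈ e}.ncard +
      (A.filter fun v => v ∈ S ∧ ¬ ∃ e ∈ R, v ∈ e).card := by
    rw [← Set.ncard_coe_finset]
    refine (Set.ncard_le_ncard (fun v hv => ?_) (Set.toFinite _)).trans (Set.ncard_union_le _ _)
    by_cases h : ∃ e ∈ R, v ∈ e
    · exact Or.inl ⟨hv, h⟩
    · refine Or.inr ?_
      simp only [Finset.coe_filter]
      have hv' := hv
      rw [hS] at hv'
      exact ⟨(hA v).2 hv'.1, hv, h⟩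
  omega

/-- A path covering attaining the upper bound. -/
theorem exists_subgraph_ncard_edgeSet [Fintype V] {T : SimpleGraph V} {A : Finset V}
    (hA : ∀ v, v ∈ A ↔ 2 < ndeg T v)
    (hh : ∀ v, 2 < ndeg T v → ∃ w, T.Adj v w ∧ ndeg T w ≤ 2) {S : Set V}
    (hS : S = {v | 2 < ndeg T v ∧ {w | T.Adj v w ∧ ndeg T w ≤ 2}.ncard = 1}) :
    ∃ H ≤ T, (∀ v, ndeg H v ≤ 2) ∧
      {e ∈ T.edgeSet | ∀ v ∈ e, v ∉ A}.ncard + 2 * A.card + matchingNumberOn T S ≤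
        H.edgeSet.ncard + S.ncard := by
  classical
  have hSA : ∀ v ∈ S, v ∈ A := fun v hv => by
    rw [hS] at hv
    exact (hA v).2 hv.1
  obtain ⟨M, hMT, hMS, hMd, hMcard⟩ := Nat.sSup_mem (s := {k | ∃ M : Set (Sym2 V),
    M ⊆ T.edgeSet ∧ (∀ e ∈ M, ∀ v ∈ e, v ∈ S) ∧
    (∀ e ∈ M, ∀ f ∈ M, e ≠ f → ∀ v, v ∈ e → v ∉ f) ∧ M.ncard = k}) ⟨0, ∅, by simp⟩
    (bddAbove_matching T S)
  have hL : ∀ v, ∃ L : Finset V, v ∈ A → (∀ w ∈ L, T.Adj v w ∧ w ∉ A) ∧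
      L.card + (if v ∈ S then 1 else 0) = 2 := fun v => by
    by_cases hv : v ∈ A
    · have hv2 := (hA v).1 hv
      obtain ⟨w, hw⟩ := hh v hv2
      have hpos : 0 < {w | T.Adj v w ∧ ndeg T w ≤ 2}.ncard :=
        (Set.ncard_pos (Set.toFinite _)).2 ⟨w, hw⟩
      have hle : 2 - (if v ∈ S then 1 else 0) ≤ {w | T.Adj v w ∧ ndeg T w ≤ 2}.ncard := by
        split_ifs with h
        · omega
        · rw [hS] at h
          have : {w | T.Adj v w ∧ ndeg T w ≤ 2}.ncard ≠ 1 := fun h1 => h ⟨hv2, h1⟩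
          omega
      rw [Set.ncard_eq_toFinset_card _ (Set.toFinite _)] at hle
      obtain ⟨L, hLsub, hLcard⟩ := Finset.exists_subset_card_eq hle
      refine ⟨L, fun _ => ⟨fun w hw => ?_, ?_⟩⟩
      · have := hLsub hw
        rw [Set.Finite.mem_toFinset] at this
        exact ⟨this.1, fun h => absurd ((hA w).1 h) (not_lt.2 this.2)⟩
      · rw [hLcard]
        split_ifs <;> rfl
    · exact ⟨∅, fun h => absurd h hv⟩
  choose L hL using hL
  let H : SimpleGraph V :=
    { Adj := fun v w => T.Adj v w ∧ ((v ∉ A ∧ w ∉ A) ∨ s(v, w) ∈ M ∨ (v ∈ A ∧ w ∈ L v) ∨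
        (w ∈ A ∧ v ∈ L w))
      symm := ⟨fun v w h => ⟨h.1.symm, by rw [Sym2.eq_swap]; tauto⟩⟩
      loopless := ⟨fun v h => T.loopless.irrefl v h.1⟩ }
  have hHT : H ≤ T := fun v w h => h.1
  have hMA : ∀ e ∈ M, ∀ v ∈ e, v ∈ A := fun e he v hv => hSA v (hMS e he v hv)
  refine ⟨H, hHT, fun v => ?_, ?_⟩
  · by_cases hv : v ∈ A
    · have hsub : H.neighborSet v ⊆ (L v : Set V) ∪ {w | s(v, w) ∈ M} := by
        rintro w ⟨hvw, h | h | h | h⟩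
        · exact absurd hv h.1
        · exact Or.inr h
        · exact Or.inl h.2
        · exact absurd hv ((hL w h.1).1 v h.2).2
      have hMle : {w | s(v, w) ∈ M}.ncard ≤ if v ∈ S then 1 else 0 := by
        split_ifs with h
        · refine (Set.ncard_le_one (Set.toFinite _)).2 fun x hx y hy => ?_
          by_contra hxy
          exact hMd _ hx _ hy (fun h => hxy (Sym2.congr_right.1 h)) v (by simp) (by simp)
        · rw [Nat.le_zero, Set.ncard_eq_zero (Set.toFinite _), Set.eq_empty_iff_forall_notMem]
          exact fun w hw => h (hMS _ hw v (by simp))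
      have h1 := (Set.ncard_le_ncard hsub (Set.toFinite _)).trans (Set.ncard_union_le _ _)
      rw [Set.ncard_coe_finset] at h1
      have h2 := (hL v hv).2
      rw [ndeg]
      omega
    · have h1 : ndeg H v ≤ ndeg T v := Set.ncard_le_ncard (fun w hw => hHT hw) (Set.toFinite _)
      have h2 := (hA v).not.1 hv
      omega
  · let X : Finset (Sym2 V) := (A.sigma L).image fun p => s(p.1, p.2)
    have hXcard : X.card = ∑ v ∈ A, (L v).card := by
      rw [← Finset.card_sigma]
      refine Finset.card_image_of_injOn ?_
      rintro ⟨v, w⟩ hp ⟨v', w'⟩ hp' h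
      obtain ⟨hv, hw⟩ := Finset.mem_sigma.1 hp
      obtain ⟨hv', hw'⟩ := Finset.mem_sigma.1 hp'
      rcases Sym2.eq_iff.1 h with ⟨h1, h2⟩ | ⟨h1, h2⟩
      · dsimp only at h1 h2
        rw [h1, h2]
      · dsimp only at h1 h2 hv hw'
        exact absurd (h1 ▸ hv) ((hL v' hv').1 w' hw').2
    have hXmem : ∀ e ∈ X, ∃ v w, e = s(v, w) ∧ v ∈ A ∧ w ∈ L v := fun e he => by
      obtain ⟨⟨v, w⟩, hp, rfl⟩ := Finset.mem_image.1 he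
      exact ⟨v, w, rfl, Finset.mem_sigma.1 hp⟩
    have hXsum : X.card + S.ncard = 2 * A.card := by
      have hSc : S.ncard = ∑ v ∈ A, if v ∈ S then 1 else 0 := by
        rw [← Finset.card_filter, ← Set.ncard_coe_finset]
        congr 1
        ext v
        simpa using hSA v
      rw [hXcard, hSc, ← Finset.sum_add_distrib, Finset.sum_congr rfl fun v hv => (hL v hv).2]
      simp [mul_comm]
    have hd1 : Disjoint {e ∈ T.edgeSet | ∀ v ∈ e, v ∉ A} (M ∪ X) := by
      rw [Set.disjoint_left]
      rintro e ⟨-, he⟩ (h | h)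
      · induction e with
        | _ a b => exact he a (by simp) (hMA _ h a (by simp))
      · obtain ⟨v, w, rfl, hv, -⟩ := hXmem e h
        exact he v (by simp) hv
    have hd2 : Disjoint M (X : Set (Sym2 V)) := by
      rw [Set.disjoint_left]
      intro e h1 h2
      obtain ⟨v, w, rfl, hv, hw⟩ := hXmem e h2
      exact ((hL v hv).1 w hw).2 (hMA _ h1 w (by simp))
    have hsub : {e ∈ T.edgeSet | ∀ v ∈ e, v ∉ A} ∪ (M ∪ X) ⊆ H.edgeSet := by
      rintro e (⟨he, h⟩ | h | h)
      · induction e with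
        | _ a b => exact ⟨he, Or.inl ⟨h a (by simp), h b (by simp)⟩⟩
      · have he := hMT h
        induction e with
        | _ a b => exact ⟨he, Or.inr (Or.inl h)⟩
      · obtain ⟨v, w, rfl, hv, hw⟩ := hXmem e h
        exact ⟨((hL v hv).1 w hw).1, Or.inr (Or.inr (Or.inl ⟨hv, hw⟩))⟩
    have h1 := Set.ncard_le_ncard hsub (Set.toFinite _)
    rw [Set.ncard_union_eq hd1 (Set.toFinite _) (Set.toFinite _),
      Set.ncard_union_eq hd2 (Set.toFinite _) (Set.toFinite _), Set.ncard_coe_finset] at h1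
    have h2 : M.ncard = matchingNumberOn T S := hMcard
    omega

theorem ncard_edgeSet_add_one_of_isTree [Fintype V] {T : SimpleGraph V} (hT : T.IsTree) :
    T.edgeSet.ncard + 1 = Fintype.card V := by
  classical
  rw [← hT.card_edgeFinset, ← Set.ncard_coe_finset, SimpleGraph.coe_edgeFinset]

/-- The number of edges between light vertices of a tree. -/
theorem ncard_light_edges_of_isTree [Fintype V] {T : SimpleGraph V} (hT : T.IsTree)
    {A : Finset V} (hA : ∀ v, v ∈ A ↔ 2 < ndeg T v) (hne : A.Nonempty) :
    {e ∈ T.edgeSet | ∀ v ∈ e, v ∉ A}.ncard + 2 * A.card + numLeaves T =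
      Fintype.card V + 1 + numHeavyEdges T := by
  classical
  have hE := ncard_edgeSet_add_one_of_isTree hT
  have hcount := ncard_edgeSet_add_ncard_inside T A
  have hheavy : {e ∈ T.edgeSet | ∀ v ∈ e, v ∈ A}.ncard = numHeavyEdges T := by
    simp only [hA, numHeavyEdges]
  have hall : ∑ v, ndeg T v = 2 * T.edgeSet.ncard := by
    simp_rw [ndeg_eq_degree]
    rw [T.sum_degrees_eq_twice_card_edges, ← Set.ncard_coe_finset, SimpleGraph.coe_edgeFinset]
  have hnontriv : Nontrivial V := by
    obtain ⟨v, hv⟩ := hne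
    rw [hA, ndeg] at hv
    obtain ⟨w, hw⟩ := (Set.ncard_pos (Set.toFinite _)).1 (lt_trans two_pos hv)
    exact ⟨v, w, T.ne_of_adj hw⟩
  have hlight : ∑ v ∈ Aᶜ, ndeg T v + numLeaves T = 2 * Aᶜ.card := by
    have hleaves : numLeaves T = ∑ v ∈ Aᶜ, if ndeg T v = 1 then 1 else 0 := by
      rw [← Finset.card_filter, ← Set.ncard_coe_finset, numLeaves]
      congr 1
      ext v
      simp only [Finset.coe_filter, Finset.mem_compl, hA, Set.mem_ofPred_eq]
      omega
    rw [hleaves, ← Finset.sum_add_distrib, mul_comm, ← smul_eq_mul]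
    refine Finset.sum_eq_card_nsmul fun v hv => ?_
    rw [Finset.mem_compl, hA] at hv
    have : 0 < ndeg T v := by
      rw [ndeg_eq_degree]
      exact hT.connected.preconnected.degree_pos_of_nontrivial v
    split_ifs <;> omega
  have hsplit := Finset.sum_add_sum_compl A (ndeg T)
  have hcompl := Finset.card_add_card_compl A
  omega

/-- A graph with a heavy vertex has a path covering with at least two edges. -/
theorem exists_subgraph_two_edges [Finite V] {T : SimpleGraph V} {v : V} (hv : 2 < ndeg T v) :
    ∃ H ≤ T, (∀ w, ndeg H w ≤ 2) ∧ H.edgeSet.ncard = 2 := by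
  classical
  obtain ⟨a, ha, b, hb, hab⟩ := (Set.one_lt_ncard (Set.toFinite _)).1 (lt_trans one_lt_two hv)
  have hva : T.Adj v a := ha
  have hvb : T.Adj v b := hb
  let H := SimpleGraph.fromEdgeSet ({s(v, a), s(v, b)} : Set (Sym2 V))
  have hE : H.edgeSet = {s(v, a), s(v, b)} := by
    rw [SimpleGraph.edgeSet_fromEdgeSet, sdiff_eq_left, Set.disjoint_left]
    rintro e (rfl | rfl)
    · simpa using hva.ne
    · simpa using hvb.ne
  have hcard : H.edgeSet.ncard = 2 := by
    rw [hE]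
    exact Set.ncard_pair (fun h => hab (Sym2.congr_right.1 h))
  refine ⟨H, ?_, fun w => ?_, hcard⟩
  · rw [← SimpleGraph.edgeSet_subset_edgeSet, hE]
    rintro e (rfl | rfl)
    exacts [hva, hvb]
  · rw [← hcard]
    refine Set.ncard_le_ncard_of_injOn (fun x => s(w, x)) (fun x hx => hx) ?_ (Set.toFinite _)
    intro x _ y _ h
    exact Sym2.congr_right.1 h

/-- **Corollary (Statement 4).** Let `T` be a non-path tree on `n` vertices, with `ℓ`
leaves and `h` heavy edges, in which each heavy vertex has at least one light neighbor.
With `S`, `s = |S|`, `t` as in Statement 2, `λ(Tᶜ) = n + ℓ − h + s − t − 3` and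
`ρ(Tᶜ) = ℓ − h + s − t − 2`. -/
theorem tree_complement_lambda_hole {V : Type*} [Fintype V] (T : SimpleGraph V)
    (hT : T.IsTree) (hnp : ¬ IsPathGraph T)
    (hh : ∀ v, 2 < ndeg T v → ∃ w, T.Adj v w ∧ ndeg T w ≤ 2)
    (S : Set V)
    (hS : S = {v | 2 < ndeg T v ∧ {w | T.Adj v w ∧ ndeg T w ≤ 2}.ncard = 1}) :
    (lambdaNum Tᶜ : ℤ) =
      Fintype.card V + numLeaves T - numHeavyEdges T + S.ncard - matchingNumberOn T S - 3 ∧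
    (holeIndex Tᶜ : ℤ) =
      numLeaves T - numHeavyEdges T + S.ncard - matchingNumberOn T S - 2 := by
  classical
  have : Nonempty V := hT.connected.nonempty
  let A : Finset V := Finset.univ.filter fun v => 2 < ndeg T v
  have hA : ∀ v, v ∈ A ↔ 2 < ndeg T v := fun v => by simp [A]
  obtain ⟨v, hv⟩ : ∃ v, 2 < ndeg T v := by
    by_contra! h
    exact hnp ⟨hT, h⟩
  have hlight := ncard_light_edges_of_isTree hT hA ⟨v, (hA v).2 hv⟩
  have hub := fun H hHT hdeg => ncard_edgeSet_add_le (H := H) hA hS hHT hdeg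
  obtain ⟨H, hHT, hdeg, hle⟩ := exists_subgraph_ncard_edgeSet hA hh hS
  obtain ⟨K, hKT, hKdeg, hKcard⟩ := exists_subgraph_two_edges hv
  have hmax : ∀ G ≤ T, (∀ v, ndeg G v ≤ 2) → G.edgeSet.ncard ≤ H.edgeSet.ncard :=
    fun G hG hGdeg => by
      have := hub G hG hGdeg
      omega
  have hlt : H.edgeSet.ncard < T.edgeSet.ncard := by
    refine Set.ncard_lt_ncard (SimpleGraph.edgeSet_ssubset_edgeSet.2 (lt_of_le_of_ne hHT ?_))
      (Set.toFinite _)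
    rintro rfl
    exact absurd hv (not_lt.2 (hdeg v))
  have hE := ncard_edgeSet_add_one_of_isTree hT
  obtain ⟨h1, h2⟩ := lambdaNum_holeIndex_compl hT.isAcyclic (m := H.edgeSet.ncard)
    (hKcard ▸ hmax K hKT hKdeg) (by omega) ⟨H, hHT, hdeg, le_rfl⟩ hmax
  have h3 := hub H hHT hdeg
  omega

end PaperPC
end

section
/- Let G be a connected graph that is not a cycle, with m ≥ 1 edges, n vertices, h heavy edges, and ℓ leaves. If every heavy vertex of G is adjacent to at least three light vertices, then P(G) = ℓ + m − h − n. -/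
namespace PaperPC

open SimpleGraph

variable {V : Type*}

/-- A connection in `K ⊔ edge v w` either avoids the new edge or crosses it. -/
lemma reachable_or_of_sup_edge {K : SimpleGraph V} {v w x y : V}
    (h : (K ⊔ edge v w).Reachable x y) :
    K.Reachable x y ∨ (K.Reachable x v ∧ K.Reachable w y) ∨
      (K.Reachable x w ∧ K.Reachable v y) := by
  obtain ⟨p⟩ := h
  induction p with
  | nil => exact Or.inl (Reachable.refl _)
  | cons hadj _ ih =>
    rw [sup_adj, edge_adj] at hadj
    rcases hadj with hadj | ⟨⟨rfl, rfl⟩ | ⟨rfl, rfl⟩, -⟩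
    · have := hadj.reachable
      rcases ih with h | ⟨h, h'⟩ | ⟨h, h'⟩
      · exact Or.inl (this.trans h)
      · exact Or.inr (Or.inl ⟨this.trans h, h'⟩)
      · exact Or.inr (Or.inr ⟨this.trans h, h'⟩)
    · rcases ih with h | ⟨h, h'⟩ | ⟨h, h'⟩
      · exact Or.inr (Or.inl ⟨Reachable.refl _, h⟩)
      · exact Or.inr (Or.inl ⟨Reachable.refl _, h'⟩)
      · exact Or.inl h'
    · rcases ih with h | ⟨h, h'⟩ | ⟨h, h'⟩
      · exact Or.inr (Or.inr ⟨Reachable.refl _, h⟩)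
      · exact Or.inl h'
      · exact Or.inr (Or.inr ⟨Reachable.refl _, h'⟩)

/-- Joining two components by an edge lowers the number of components by one. -/
lemma numPaths_sup_edge [Finite V] {K : SimpleGraph V} {v w : V} (h : ¬K.Reachable v w) :
    numPaths (K ⊔ edge v w) + 1 = numPaths K := by
  classical
  have hvw : v ≠ w := by rintro rfl; exact h (Reachable.refl _)
  let f : {c : K.ConnectedComponent // c ≠ K.connectedComponentMk w} →
      (K ⊔ edge v w).ConnectedComponent :=
    fun c => c.1.map (Hom.ofLE le_sup_left)
  have hf : Function.Bijective f := by
    constructor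
    · rintro ⟨c, hc⟩ ⟨d, hd⟩ hcd
      induction c using ConnectedComponent.ind with | _ x
      induction d using ConnectedComponent.ind with | _ y
      have hxy : (K ⊔ edge v w).Reachable x y := ConnectedComponent.exact hcd
      refine Subtype.ext (ConnectedComponent.sound ?_)
      rcases reachable_or_of_sup_edge hxy with h' | ⟨-, h'⟩ | ⟨h', -⟩
      · exact h'
      · exact absurd (ConnectedComponent.sound h'.symm) hd
      · exact absurd (ConnectedComponent.sound h') hc
    · intro c
      induction c using ConnectedComponent.ind with | _ x
      by_cases hx : K.Reachable x w
      · refine ⟨⟨K.connectedComponentMk v, fun hv => h (ConnectedComponent.exact hv)⟩, ?_⟩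
        refine ConnectedComponent.sound (Reachable.trans (Adj.reachable ?_)
          (hx.symm.mono le_sup_left))
        exact Or.inr ((edge_adj ..).2 ⟨Or.inl ⟨rfl, rfl⟩, hvw⟩)
      · exact ⟨⟨K.connectedComponentMk x, fun hv => hx (ConnectedComponent.exact hv)⟩, rfl⟩
  have hcard := Nat.card_eq_of_bijective f hf
  have : Fintype K.ConnectedComponent := Fintype.ofFinite _
  have hsub : Nat.card {c : K.ConnectedComponent // c ≠ K.connectedComponentMk w} =
      Nat.card K.ConnectedComponent - 1 := by
    simp [Nat.card_eq_fintype_card, Fintype.card_subtype_compl]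
  have hpos : 0 < Nat.card K.ConnectedComponent :=
    Nat.card_pos_iff.2 ⟨⟨K.connectedComponentMk w⟩, inferInstance⟩
  unfold numPaths
  omega

lemma deleteEdges_sup_edge {K : SimpleGraph V} {u v : V} (h : K.Adj u v) :
    K.deleteEdges {s(u, v)} ⊔ edge u v = K := by
  ext x y
  have := h.ne
  simp only [sup_adj, deleteEdges_adj, edge_adj, Set.mem_singleton_iff, Sym2.eq_iff]
  constructor
  · rintro (h' | ⟨⟨rfl, rfl⟩ | ⟨rfl, rfl⟩, -⟩)
    exacts [h'.1, h, h.symm]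
  · intro h'
    by_cases hxy : (x = u ∧ y = v) ∨ (x = v ∧ y = u)
    · exact Or.inr ⟨by tauto, h'.ne⟩
    · exact Or.inl ⟨h', hxy⟩

/-- Deleting an edge whose endpoints stay connected does not create new components. -/
lemma numPaths_deleteEdges_le [Finite V] {K : SimpleGraph V} {u v : V}
    (h : (K.deleteEdges {s(u, v)}).Reachable u v) :
    numPaths (K.deleteEdges {s(u, v)}) ≤ numPaths K := by
  have key : ∀ x y, K.Reachable x y → (K.deleteEdges {s(u, v)}).Reachable x y := by
    rintro x y ⟨p⟩
    induction p with
    | nil => exact Reachable.refl _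
    | @cons a b _ hadj _ ih =>
      refine Reachable.trans ?_ ih
      by_cases hab : s(a, b) = s(u, v)
      · rcases Sym2.eq_iff.1 hab with ⟨rfl, rfl⟩ | ⟨rfl, rfl⟩
        exacts [h, h.symm]
      · exact Adj.reachable (by simpa [deleteEdges_adj, hab] using hadj)
  refine Nat.card_le_card_of_surjective
    (Quot.lift (K.deleteEdges {s(u, v)}).connectedComponentMk
      fun x y hxy => ConnectedComponent.sound (key x y hxy)) ?_
  intro c
  induction c using ConnectedComponent.ind with | _ x
  exact ⟨K.connectedComponentMk x, rfl⟩

/-- In a finite forest, the number of components plus the number of edges is the number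
of vertices. -/
lemma numPaths_add_numEdges [Finite V] {K : SimpleGraph V} (hK : K.IsAcyclic) :
    numPaths K + numEdges K = Nat.card V := by
  induction hn : numEdges K generalizing K with
  | zero =>
    have hbot : K = ⊥ := by
      rw [← edgeSet_eq_empty]
      exact (Set.ncard_eq_zero (Set.toFinite _)).1 hn
    subst hbot
    refine (Nat.card_eq_of_bijective (⊥ : SimpleGraph V).connectedComponentMk ⟨?_, ?_⟩).symm
    · intro x y hxy
      simpa using hxy
    · exact Quot.mk_surjective
  | succ n ih =>
    obtain ⟨e, he⟩ : K.edgeSet.Nonempty := by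
      rw [← Set.ncard_pos (Set.toFinite _), ← numEdges, hn]
      exact Nat.succ_pos n
    induction e with | _ u v
    have hbr := isAcyclic_iff_forall_isBridge.1 hK he
    have hcard : numEdges (K.deleteEdges {s(u, v)}) = n := by
      rw [numEdges, edgeSet_deleteEdges, Set.ncard_sdiff_singleton_of_mem he]
      exact Nat.sub_eq_of_eq_add hn
    have h1 := ih (hK.anti (deleteEdges_le _)) hcard
    have h2 := numPaths_sup_edge (isBridge_iff.1 hbr)
    rw [deleteEdges_sup_edge he] at h2
    omega

/-- In a graph of maximum degree at most two, every vertex connected to a cycle lies on it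
and has degree two. -/
lemma ndeg_eq_two_of_reachable_isCycle [Finite V] {K : SimpleGraph V} (hK : ∀ v, ndeg K v ≤ 2)
    {a : V} {p : K.Walk a a} (hp : p.IsCycle) {x : V} (hx : K.Reachable a x) :
    x ∈ p.support ∧ ndeg K x = 2 := by
  have hnb : ∀ y ∈ p.support, p.toSubgraph.neighborSet y = K.neighborSet y := fun y hy =>
    Set.eq_of_subset_of_ncard_le (p.toSubgraph.neighborSet_subset y)
      ((hK y).trans (hp.ncard_neighborSet_toSubgraph_eq_two hy).ge) (Set.toFinite _)
  have hmem : x ∈ p.support := by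
    have : ∀ y z, K.Reachable y z → y ∈ p.support → z ∈ p.support := by
      rintro y z ⟨q⟩
      induction q with
      | nil => exact id
      | @cons c d _ hadj _ ih =>
        intro hc
        refine ih ?_
        have : d ∈ p.toSubgraph.neighborSet c := by rw [hnb c hc]; exact hadj
        exact (p.mem_verts_toSubgraph).1 (p.toSubgraph.edge_vert this.symm)
    exact this a x hx p.start_mem_support
  exact ⟨hmem, by rw [ndeg, ← hnb x hmem, hp.ncard_neighborSet_toSubgraph_eq_two hmem]⟩

lemma two_mul_numEdges [Fintype V] (K : SimpleGraph V) :
    2 * numEdges K = ∑ v, ndeg K v := by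
  classical
  rw [numEdges, ← coe_edgeFinset, Set.ncard_coe_finset, ← K.sum_degrees_eq_twice_card_edges]
  exact Finset.sum_congr rfl fun v _ => by
    rw [ndeg, Set.ncard_eq_toFinset_card', ← neighborFinset_def, card_neighborFinset_eq_degree]

open scoped Classical in
/-- The sum of `f` over the vertices satisfying `P`. -/
noncomputable def sumOver [Fintype V] (P : V → Prop) (f : V → ℕ) : ℕ :=
  ∑ x with P x, f x

open scoped Classical in
lemma sumOver_congr [Fintype V] {P : V → Prop} {f g : V → ℕ} (h : ∀ x, P x → f x = g x) :
    sumOver P f = sumOver P g :=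
  Finset.sum_congr rfl fun x hx => h x (Finset.mem_filter.1 hx).2

open scoped Classical in
lemma sumOver_mono [Fintype V] {P : V → Prop} {f g : V → ℕ} (h : ∀ x, P x → f x ≤ g x) :
    sumOver P f ≤ sumOver P g :=
  Finset.sum_le_sum fun x hx => h x (Finset.mem_filter.1 hx).2

lemma sumOver_add [Fintype V] (P : V → Prop) (f g : V → ℕ) :
    sumOver P (fun x => f x + g x) = sumOver P f + sumOver P g :=
  Finset.sum_add_distrib

lemma sumOver_two [Fintype V] (P : V → Prop) :
    sumOver P (fun _ => 2) = 2 * sumOver P fun _ => 1 :=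
  (sumOver_add P (fun _ => 1) fun _ => 1).trans (two_mul _).symm

lemma sumOver_add_sumOver_not [Fintype V] (P : V → Prop) (f : V → ℕ) :
    sumOver P f + sumOver (fun x => ¬P x) f = ∑ x, f x := by
  classical
  rw [← Finset.sum_filter_add_sum_filter_not Finset.univ P f]
  unfold sumOver
  congr!

/-- The number of ordered pairs of adjacent vertices, the first satisfying `P` and the
second satisfying `Q`. -/
noncomputable def numAdj [Fintype V] (K : SimpleGraph V) (P Q : V → Prop) : ℕ :=
  sumOver P fun x => sumOver Q ((K.neighborSet x).indicator fun _ => 1)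

lemma numAdj_comm [Fintype V] (K : SimpleGraph V) (P Q : V → Prop) :
    numAdj K P Q = numAdj K Q P := by
  classical
  unfold numAdj sumOver
  rw [Finset.sum_comm]
  simp only [Set.indicator_apply, mem_neighborSet, K.adj_comm]

lemma numAdj_mono [Fintype V] {K L : SimpleGraph V} {P Q : V → Prop}
    (h : ∀ x y, K.Adj x y → P x → Q y → L.Adj x y) : numAdj K P Q ≤ numAdj L P Q := by
  refine sumOver_mono fun x hx => sumOver_mono fun y hy => ?_
  by_cases hxy : K.Adj x y
  · simp [hxy, h x y hxy hx hy]
  · simp [hxy]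

open scoped Classical in
lemma numAdj_eq_zero [Fintype V] {K : SimpleGraph V} {P Q : V → Prop}
    (h : ∀ x y, K.Adj x y → P x → ¬Q y) : numAdj K P Q = 0 :=
  Finset.sum_eq_zero fun x hx => Finset.sum_eq_zero fun y hy =>
    Set.indicator_of_notMem (s := K.neighborSet x) (fun hxy =>
      h x y hxy (Finset.mem_filter.1 hx).2 (Finset.mem_filter.1 hy).2) _

lemma ndeg_eq_sum_indicator [Fintype V] (K : SimpleGraph V) (x : V) :
    ndeg K x = ∑ y, (K.neighborSet x).indicator (fun _ => 1) y := by
  classical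
  simp only [Set.indicator_apply]
  rw [Finset.sum_boole, ndeg, ← Set.ncard_coe_finset]
  congr 1
  ext y
  simp

lemma sumOver_ndeg [Fintype V] (K : SimpleGraph V) (P Q : V → Prop) :
    sumOver P (ndeg K) = numAdj K P Q + numAdj K P fun x => ¬Q x := by
  rw [numAdj, numAdj, ← sumOver_add]
  exact sumOver_congr fun x _ => by rw [sumOver_add_sumOver_not, ndeg_eq_sum_indicator]

lemma two_mul_numEdges_eq_numAdj [Fintype V] (K : SimpleGraph V) (P : V → Prop) :
    2 * numEdges K = numAdj K P P + 2 * numAdj K P (fun x => ¬P x) +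
      numAdj K (fun x => ¬P x) fun x => ¬P x := by
  have h1 := sumOver_ndeg K P P
  have h2 := sumOver_ndeg K (fun x => ¬P x) P
  have h3 := sumOver_add_sumOver_not P (ndeg K)
  have h4 := numAdj_comm K P fun x => ¬P x
  rw [two_mul_numEdges]
  omega

lemma two_mul_numHeavyEdges [Fintype V] (G : SimpleGraph V) :
    2 * numHeavyEdges G = numAdj G (fun x => ¬ndeg G x ≤ 2) fun x => ¬ndeg G x ≤ 2 := by
  let K : SimpleGraph V :=
    { Adj := fun x y => G.Adj x y ∧ ¬ndeg G x ≤ 2 ∧ ¬ndeg G y ≤ 2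
      symm := ⟨fun x y h => ⟨h.1.symm, h.2.2, h.2.1⟩⟩
      loopless := ⟨fun x h => h.1.ne rfl⟩ }
  have hK : numHeavyEdges G = numEdges K := by
    rw [numHeavyEdges, numEdges]
    congr 1
    ext e
    induction e with | _ x y
    simp [K]
  have h1 : numAdj K (fun x => ndeg G x ≤ 2) (fun x => ndeg G x ≤ 2) = 0 :=
    numAdj_eq_zero fun x y h hx => absurd hx h.2.1
  have h2 : numAdj K (fun x => ndeg G x ≤ 2) (fun x => ¬ndeg G x ≤ 2) = 0 :=
    numAdj_eq_zero fun x y h hx => absurd hx h.2.1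
  rw [hK, two_mul_numEdges_eq_numAdj K fun x => ndeg G x ≤ 2, h1, h2, mul_zero, add_zero,
    zero_add]
  exact le_antisymm (numAdj_mono fun x y h _ _ => h.1) (numAdj_mono fun x y h hx hy => ⟨h, hx, hy⟩)

/-- The number of edges between light vertices, in terms of the numbers of vertices, edges,
leaves and heavy edges. -/
lemma numAdj_light_add [Fintype V] {G : SimpleGraph V} (hpos : ∀ v, 1 ≤ ndeg G v) :
    numAdj G (fun x => ndeg G x ≤ 2) (fun x => ndeg G x ≤ 2) +
      4 * sumOver (fun x => ¬ndeg G x ≤ 2) (fun _ => 1) + 2 * numLeaves G + 2 * numEdges G =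
    4 * Fintype.card V + 2 * numHeavyEdges G := by
  classical
  have h1 := sumOver_ndeg G (fun x => ndeg G x ≤ 2) (fun x => ndeg G x ≤ 2)
  have h2 := two_mul_numEdges_eq_numAdj G fun x => ndeg G x ≤ 2
  have h3 := two_mul_numHeavyEdges G
  have h4 := sumOver_add_sumOver_not (fun x => ndeg G x ≤ 2) fun _ => 1
  have h5 : sumOver (fun x => ndeg G x ≤ 2) (ndeg G) + numLeaves G =
      2 * sumOver (fun x => ndeg G x ≤ 2) fun _ => 1 := by
    have hl : numLeaves G =
        sumOver (fun x => ndeg G x ≤ 2) fun x => if ndeg G x = 1 then 1 else 0 := by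
      rw [sumOver, Finset.sum_boole, numLeaves, ← Set.ncard_coe_finset]
      congr 1
      ext x
      simp only [Set.mem_ofPred_eq, Finset.coe_filter, Finset.mem_filter, Finset.mem_univ,
        true_and]
      omega
    rw [hl, ← sumOver_add, ← sumOver_two]
    refine sumOver_congr fun x hx => ?_
    have := hpos x
    split_ifs <;> omega
  rw [Finset.sum_const, smul_eq_mul, mul_one, Finset.card_univ] at h4
  omega

/-- A subgraph of maximum degree at most two misses many edges at the heavy vertices. -/
lemma numEdges_add_le [Fintype V] {G F : SimpleGraph V} (hpos : ∀ v, 1 ≤ ndeg G v)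
    (hFG : F ≤ G) (hF : ∀ v, ndeg F v ≤ 2) :
    numEdges F + numLeaves G + numEdges G ≤ 2 * Fintype.card V + numHeavyEdges G := by
  have h1 := numAdj_light_add hpos
  have h2 := two_mul_numEdges_eq_numAdj F fun x => ndeg G x ≤ 2
  have h3 := sumOver_ndeg F (fun x => ¬ndeg G x ≤ 2) (fun x => ndeg G x ≤ 2)
  have h4 := numAdj_comm F (fun x => ndeg G x ≤ 2) (fun x => ¬ndeg G x ≤ 2)
  have h5 : numAdj F (fun x => ndeg G x ≤ 2) (fun x => ndeg G x ≤ 2) ≤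
      numAdj G (fun x => ndeg G x ≤ 2) (fun x => ndeg G x ≤ 2) :=
    numAdj_mono fun x y h _ _ => hFG h
  have h6 : sumOver (fun x => ¬ndeg G x ≤ 2) (ndeg F) ≤
      sumOver (fun x => ¬ndeg G x ≤ 2) fun _ => 2 := sumOver_mono fun x _ => hF x
  rw [sumOver_two] at h6
  omega

/-- A subgraph keeping all edges between light vertices, no heavy edges, and exactly two
edges at each heavy vertex. -/
structure IsSaturated (G F : SimpleGraph V) : Prop where
  le : F ≤ G
  light : ∀ x y, G.Adj x y → ndeg G x ≤ 2 → ndeg G y ≤ 2 → F.Adj x y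
  heavy : ∀ x, 2 < ndeg G x → ndeg F x = 2
  no_heavy : ∀ x y, F.Adj x y → 2 < ndeg G x → ndeg G y ≤ 2

lemma ndeg_mono [Finite V] {F G : SimpleGraph V} (h : F ≤ G) (v : V) : ndeg F v ≤ ndeg G v :=
  Set.ncard_le_ncard (fun _ hx => h hx) (Set.toFinite _)

lemma IsSaturated.ndeg_le [Finite V] {G F : SimpleGraph V} (h : IsSaturated G F) (v : V) :
    ndeg F v ≤ 2 := by
  by_cases hv : 2 < ndeg G v
  · exact (h.heavy v hv).le
  · exact (ndeg_mono h.le v).trans (not_lt.1 hv)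

lemma IsSaturated.numEdges_eq [Fintype V] {G F : SimpleGraph V} (hpos : ∀ v, 1 ≤ ndeg G v)
    (h : IsSaturated G F) :
    numEdges F + numLeaves G + numEdges G = 2 * Fintype.card V + numHeavyEdges G := by
  classical
  have h1 := numAdj_light_add hpos
  have h2 := two_mul_numEdges_eq_numAdj F fun x => ndeg G x ≤ 2
  have h3 := sumOver_ndeg F (fun x => ¬ndeg G x ≤ 2) (fun x => ndeg G x ≤ 2)
  have h4 := numAdj_comm F (fun x => ndeg G x ≤ 2) (fun x => ¬ndeg G x ≤ 2)
  have h5 : numAdj F (fun x => ndeg G x ≤ 2) (fun x => ndeg G x ≤ 2) =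
      numAdj G (fun x => ndeg G x ≤ 2) (fun x => ndeg G x ≤ 2) :=
    le_antisymm (numAdj_mono fun x y hxy _ _ => h.le hxy) (numAdj_mono h.light)
  have h6 : sumOver (fun x => ¬ndeg G x ≤ 2) (ndeg F) =
      sumOver (fun x => ¬ndeg G x ≤ 2) fun _ => 2 :=
    sumOver_congr fun x hx => h.heavy x (not_le.1 hx)
  have h7 : numAdj F (fun x => ¬ndeg G x ≤ 2) (fun x => ¬ndeg G x ≤ 2) = 0 :=
    numAdj_eq_zero fun x y hxy hx => not_not.2 (h.no_heavy x y hxy (not_le.1 hx))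
  rw [sumOver_two] at h6
  omega

lemma exists_isSaturated [Finite V] {G : SimpleGraph V}
    (hh : ∀ v, 2 < ndeg G v → 3 ≤ {w | G.Adj v w ∧ ndeg G w ≤ 2}.ncard) :
    ∃ F, IsSaturated G F := by
  have hS : ∀ v, ∃ S : Set V, 2 < ndeg G v →
      S ⊆ {w | G.Adj v w ∧ ndeg G w ≤ 2} ∧ S.ncard = 2 := fun v => by
    by_cases hv : 2 < ndeg G v
    · obtain ⟨S, hS⟩ := Set.exists_subset_card_eq ((Nat.le_succ 2).trans (hh v hv))
      exact ⟨S, fun _ => hS⟩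
    · exact ⟨∅, fun h => absurd h hv⟩
  choose S hS using hS
  let F : SimpleGraph V :=
    { Adj := fun x y => G.Adj x y ∧ ((ndeg G x ≤ 2 ∧ ndeg G y ≤ 2) ∨
        (2 < ndeg G x ∧ y ∈ S x) ∨ (2 < ndeg G y ∧ x ∈ S y))
      symm := ⟨fun x y h => ⟨h.1.symm, by tauto⟩⟩
      loopless := ⟨fun x h => h.1.ne rfl⟩ }
  refine ⟨F, fun x y h => h.1, fun x y h hx hy => ⟨h, Or.inl ⟨hx, hy⟩⟩, fun x hx => ?_,
    fun x y h hx => ?_⟩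
  · have : F.neighborSet x = S x := by
      ext y
      constructor
      · rintro ⟨-, h | h | h⟩
        · exact absurd h.1 (not_le.2 hx)
        · exact h.2
        · exact absurd ((hS y h.1).1 h.2).2 (not_le.2 hx)
      · intro hy
        exact ⟨((hS x hx).1 hy).1, Or.inr (Or.inl ⟨hx, hy⟩)⟩
    rw [ndeg, this, (hS x hx).2]
  · obtain ⟨-, h | h | h⟩ := h
    · exact h.2
    · exact ((hS x hx).1 h.2).2
    · exact absurd ((hS y h.1).1 h.2).2 (not_le.2 hx)

/-- Redirecting one of the two edges at a heavy vertex to another light neighbor. -/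
lemma IsSaturated.exchange [Finite V] {G F : SimpleGraph V} (h : IsSaturated G F) {v u w : V}
    (hv : 2 < ndeg G v) (hvu : F.Adj v u) (hvw : G.Adj v w) (hw : ndeg G w ≤ 2)
    (hnvw : ¬F.Adj v w) : IsSaturated G (F.deleteEdges {s(v, u)} ⊔ edge v w) := by
  have hu := h.no_heavy v u hvu hv
  have hadj : ∀ x y, (F.deleteEdges {s(v, u)} ⊔ edge v w).Adj x y ↔
      (F.Adj x y ∧ ¬((x = v ∧ y = u) ∨ (x = u ∧ y = v))) ∨
        ((x = v ∧ y = w) ∨ (x = w ∧ y = v)) := by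
    intro x y
    simp only [sup_adj, deleteEdges_adj, edge_adj, Set.mem_singleton_iff, Sym2.eq_iff]
    have := hvw.ne
    constructor
    · tauto
    · rintro (h | ⟨rfl, rfl⟩ | ⟨rfl, rfl⟩)
      · exact Or.inl h
      · exact Or.inr ⟨by tauto, this⟩
      · exact Or.inr ⟨by tauto, this.symm⟩
  refine ⟨fun x y hxy => ?_, fun x y hxy hx hy => ?_, fun x hx => ?_, fun x y hxy hx => ?_⟩
  · rcases (hadj x y).1 hxy with h' | ⟨rfl, rfl⟩ | ⟨rfl, rfl⟩
    exacts [h.le h'.1, hvw, hvw.symm]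
  · refine (hadj x y).2 (Or.inl ⟨h.light x y hxy hx hy, ?_⟩)
    rintro (⟨rfl, rfl⟩ | ⟨rfl, rfl⟩)
    · exact absurd hv (not_lt.2 hx)
    · exact absurd hv (not_lt.2 hy)
  · have hxu : x ≠ u := by rintro rfl; omega
    have hxw : x ≠ w := by rintro rfl; omega
    by_cases hxv : x = v
    · subst hxv
      have : (F.deleteEdges {s(x, u)} ⊔ edge x w).neighborSet x =
          insert w (F.neighborSet x \ {u}) := by
        ext y
        rw [mem_neighborSet, hadj]
        simp only [Set.mem_insert_iff, Set.mem_sdiff, mem_neighborSet, Set.mem_singleton_iff]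
        tauto
      rw [ndeg, this, Set.ncard_insert_of_notMem (fun hmem => hnvw hmem.1) (Set.toFinite _),
        Set.ncard_sdiff_singleton_add_one (s := F.neighborSet x) hvu (Set.toFinite _)]
      exact h.heavy x hx
    · rw [← h.heavy x hx, ndeg, ndeg]
      congr 1
      ext y
      rw [mem_neighborSet, hadj, mem_neighborSet]
      tauto
  · rcases (hadj x y).1 hxy with h' | ⟨rfl, rfl⟩ | ⟨rfl, rfl⟩
    · exact h.no_heavy x y h'.1 hx
    · exact hw
    · omega

/-- A cycle in a saturated subgraph can be opened at a heavy vertex, merging components. -/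
lemma IsSaturated.exists_numPaths_lt [Finite V] {G F : SimpleGraph V} (hc : G.Connected)
    (hnc : ¬IsCycleGraph G)
    (hh : ∀ v, 2 < ndeg G v → 3 ≤ {w | G.Adj v w ∧ ndeg G w ≤ 2}.ncard)
    (h : IsSaturated G F) (hF : ¬F.IsAcyclic) :
    ∃ F', IsSaturated G F' ∧ numPaths F' < numPaths F := by
  obtain ⟨a, p, hp⟩ : ∃ (a : V) (p : F.Walk a a), p.IsCycle := by
    simpa [IsAcyclic] using hF
  have hcyc : ∀ {x}, F.Reachable a x → x ∈ p.support ∧ ndeg F x = 2 :=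
    ndeg_eq_two_of_reachable_isCycle h.ndeg_le hp
  obtain ⟨v, hav, hv⟩ : ∃ v, F.Reachable a v ∧ 2 < ndeg G v := by
    by_contra! hlight
    have hall : ∀ y z, G.Reachable y z → F.Reachable a y → F.Reachable a z := by
      rintro y z ⟨q⟩
      induction q with
      | nil => exact id
      | @cons c d _ hadj _ ih =>
        intro hac
        have hnb : F.neighborSet c = G.neighborSet c :=
          Set.eq_of_subset_of_ncard_le (fun _ hx => h.le hx)
            ((hlight c hac).trans (hcyc hac).2.ge) (Set.toFinite _)
        have : d ∈ F.neighborSet c := by rw [hnb]; exact hadj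
        exact ih (hac.trans (Adj.reachable this))
    refine hnc ⟨hc, fun x => ?_⟩
    have hax := hall a x (hc.preconnected a x) (Reachable.refl _)
    exact le_antisymm (hlight x hax) ((hcyc hax).2 ▸ ndeg_mono h.le x)
  obtain ⟨w, ⟨hvw, hw⟩, hnvw⟩ : ∃ w ∈ {w | G.Adj v w ∧ ndeg G w ≤ 2}, w ∉ F.neighborSet v := by
    refine Set.exists_mem_notMem_of_ncard_lt_ncard ?_ (Set.toFinite _)
    have := h.heavy v hv
    rw [ndeg] at this
    have := hh v hv
    omega
  have hnr : ¬F.Reachable v w := by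
    intro hr
    have hlt : ndeg F w < ndeg G w := by
      refine Set.ncard_lt_ncard ⟨fun _ hx => h.le hx, fun hsub => hnvw ?_⟩ (Set.toFinite _)
      exact (hsub (show v ∈ G.neighborSet w from hvw.symm)).symm
    have := (hcyc (hav.trans hr)).2
    omega
  obtain ⟨u, hu⟩ : (p.toSubgraph.neighborSet v).Nonempty := by
    refine Set.nonempty_of_ncard_ne_zero ?_
    rw [hp.ncard_neighborSet_toSubgraph_eq_two (hcyc hav).1]
    exact two_ne_zero
  have hvu : F.Adj v u := p.toSubgraph.adj_sub hu
  have hdel : (F.deleteEdges {s(v, u)}).Reachable v u := by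
    by_contra hbr
    exact (isBridge_iff.2 hbr).notMem_edges_of_isCycle hp (Walk.adj_toSubgraph_iff_mem_edges.1 hu)
  refine ⟨_, h.exchange hv hvu hvw hw hnvw, ?_⟩
  have h1 := numPaths_sup_edge fun hr => hnr (hr.mono (deleteEdges_le {s(v, u)}))
  have h2 := numPaths_deleteEdges_le hdel
  omega

lemma exists_isSaturated_isAcyclic [Finite V] {G : SimpleGraph V} (hc : G.Connected)
    (hnc : ¬IsCycleGraph G)
    (hh : ∀ v, 2 < ndeg G v → 3 ≤ {w | G.Adj v w ∧ ndeg G w ≤ 2}.ncard) :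
    ∃ F, IsSaturated G F ∧ F.IsAcyclic := by
  obtain ⟨F, hF⟩ := exists_minimalFor_of_wellFoundedLT (IsSaturated G) numPaths
    (exists_isSaturated hh)
  refine ⟨F, hF.prop, by_contra fun hcyc => ?_⟩
  obtain ⟨L, hL, hlt⟩ := hF.prop.exists_numPaths_lt hc hnc hh hcyc
  exact hF.not_prop_of_lt hlt hL

/-- **Theorem (Statement 5).** Let `G` be a connected non-cycle graph with `m ≥ 1`
edges, `n` vertices, `h` heavy edges and `ℓ` leaves.  If every heavy vertex of `G` is
adjacent to at least three light vertices, then `P(G) = ℓ + m − h − n`. -/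
theorem pathCoverNumber_formula_general {V : Type*} [Fintype V] (G : SimpleGraph V)
    (hc : G.Connected) (hnc : ¬ IsCycleGraph G) (hm : 1 ≤ numEdges G)
    (hh : ∀ v, 2 < ndeg G v → 3 ≤ {w | G.Adj v w ∧ ndeg G w ≤ 2}.ncard) :
    (pathCoverNumber G : ℤ) =
      numLeaves G + numEdges G - numHeavyEdges G - Fintype.card V := by
  have hpos : ∀ v, 1 ≤ ndeg G v := by
    intro v
    obtain ⟨e, he⟩ : G.edgeSet.Nonempty := (Set.ncard_pos (Set.toFinite _)).1 hm
    induction e with | _ x y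
    have : Nontrivial V := ⟨x, y, G.ne_of_adj he⟩
    obtain ⟨w, hw⟩ := hc.preconnected.exists_adj_of_nontrivial v
    exact (Set.ncard_pos (Set.toFinite _)).2 ⟨w, hw⟩
  obtain ⟨F, hF, hacyc⟩ := exists_isSaturated_isAcyclic hc hnc hh
  have hcard := hF.numEdges_eq hpos
  have hcomp := numPaths_add_numEdges hacyc
  rw [Nat.card_eq_fintype_card] at hcomp
  have hPC : pathCoverNumber G = numPaths F := by
    refine IsLeast.csInf_eq ⟨⟨F, hF.le, ⟨hacyc, hF.ndeg_le⟩, rfl⟩, ?_⟩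
    rintro _ ⟨H, hHG, ⟨hHacyc, hHdeg⟩, rfl⟩
    have h1 := numEdges_add_le hpos hHG hHdeg
    have h2 := numPaths_add_numEdges hHacyc
    rw [Nat.card_eq_fintype_card] at h2
    omega
  omega

end PaperPC
end
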